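/- arXiv:2512.18678 — 6 statements merged into one kernel-verified Lean document; each statement's English description precedes it below -/
import Mathlib

section
/- Let (Ω, ℱ, P) be a probability space, let 𝒜 and ℬ be sub-σ-algebras of ℱ, and set α := sup{ |P(A ∩ B) − P(A)P(B)| : A ∈ 𝒜, B ∈ ℬ }. Let X be an 𝒜-measurable real random variable and Y a ℬ-measurable real random variable, and let p, p′ ∈ (1, ∞) satisfy 1/p + 1/p′ < 1; set r := (1 − 1/p − 1/p′)^{−1}. If E|X|^p < ∞ and E|Y|^{p′} < ∞, then |E[XY] − E[X]·E[Y]| ≤ 8 · α^{1/r} · (E|X|^p)^{1/p} · (E|Y|^{p′})^{1/p′}. -/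
open MeasureTheory
open scoped MeasureTheory

/-- The strong-mixing coefficient between two sub-σ-algebras `m₁` and `m₂`:
`α = sup { |P(A ∩ B) − P(A)P(B)| : A ∈ m₁, B ∈ m₂ }`. -/
noncomputable def alphaCoef {Ω : Type*} (m₁ m₂ : MeasurableSpace Ω)
    [mΩ : MeasurableSpace Ω] (μ : Measure Ω) : ℝ :=
  sSup {x : ℝ | ∃ A B : Set Ω, MeasurableSet[m₁] A ∧ MeasurableSet[m₂] B ∧
    x = |(μ (A ∩ B)).toReal - (μ A).toReal * (μ B).toReal|}

/-!
If `|X| ≤ 1` and `|Y| ≤ 1`, replacing `X` by the sign of `E[Y | m₁] - E[Y]`, and then `Y` by the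
corresponding sign, does not decrease the absolute value of the covariance. Covariances of signs
are four times those of events, which gives the constant `4`. An unbounded factor is cut at the
level `α ^ (-1 / p) * ‖X‖_p`; by Chebyshev's inequality it exceeds this level on a set of measure
at most `α`, so Hölder's inequality bounds the contribution of the tail, adding `2` to the constant.
Doing this for both factors turns `4` into `6` and then `8`. As the levels require `α > 0`, the
argument is run for all `a > α`, and then `a ↓ α`.
-/

section LpNorm

open ENNReal

variable {Ω E : Type*} {mΩ : MeasurableSpace Ω} {μ : Measure Ω} [NormedAddCommGroup E]
  {f : Ω → E} {p q r : ℝ≥0∞}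

lemma memLp_ofReal_iff_integrable_norm_rpow {s : ℝ} (hf : AEStronglyMeasurable f μ) (hs : 0 < s) :
    MemLp f (.ofReal s) μ ↔ Integrable (fun ω ↦ ‖f ω‖ ^ s) μ := by
  rw [← integrable_norm_rpow_iff hf (by simpa using hs) ofReal_ne_top, toReal_ofReal hs.le]

lemma lpNorm_ofReal_eq_integral_norm_rpow {s : ℝ} (hf : AEStronglyMeasurable f μ) (hs : 0 < s) :
    lpNorm f (.ofReal s) μ = (∫ ω, ‖f ω‖ ^ s ∂μ) ^ (1 / s) := by
  rw [lpNorm_eq_integral_norm_rpow_toReal (by simpa using hs) ofReal_ne_top hf,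
    toReal_ofReal hs.le, one_div]

lemma lpNorm_le_lpNorm_of_exponent_le [IsProbabilityMeasure μ] (hpq : p ≤ q) (hf : MemLp f q μ) :
    lpNorm f p μ ≤ lpNorm f q μ := by
  rw [← toReal_eLpNorm hf.1, ← toReal_eLpNorm hf.1]
  exact toReal_mono hf.eLpNorm_ne_top (eLpNorm_le_eLpNorm_of_exponent_le hpq hf.1)

lemma norm_integral_le_lpNorm [NormedSpace ℝ E] [IsProbabilityMeasure μ] (hp : 1 ≤ p)
    (hf : MemLp f p μ) : ‖∫ ω, f ω ∂μ‖ ≤ lpNorm f p μ :=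
  calc ‖∫ ω, f ω ∂μ‖ ≤ ∫ ω, ‖f ω‖ ∂μ := norm_integral_le_integral_norm f
    _ = lpNorm f 1 μ := (lpNorm_one_eq_integral_norm hf.1).symm
    _ ≤ lpNorm f p μ := lpNorm_le_lpNorm_of_exponent_le hp hf

lemma lpNorm_smul_le_lpNorm_mul_lpNorm {𝕜 : Type*} [NormedRing 𝕜] [MulActionWithZero 𝕜 E]
    [IsBoundedSMul 𝕜 E] {φ : Ω → 𝕜} [HolderTriple p q r] (hφ : MemLp φ p μ) (hf : MemLp f q μ) :
    lpNorm (φ • f) r μ ≤ lpNorm φ p μ * lpNorm f q μ := by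
  rw [← toReal_eLpNorm hφ.1, ← toReal_eLpNorm hf.1, ← toReal_eLpNorm (hφ.1.smul hf.1),
    ← toReal_mul]
  exact toReal_mono (mul_ne_top hφ.eLpNorm_ne_top hf.eLpNorm_ne_top)
    (eLpNorm_smul_le_mul_eLpNorm (p := p) (q := q) (r := r) hf.1 hφ.1)

lemma abs_integral_mul_le_lpNorm_mul_lpNorm [HolderConjugate p q] {X Y : Ω → ℝ}
    (hX : MemLp X p μ) (hY : MemLp Y q μ) :
    |∫ ω, X ω * Y ω ∂μ| ≤ lpNorm X p μ * lpNorm Y q μ :=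
  calc |∫ ω, X ω * Y ω ∂μ| ≤ ∫ ω, |X ω * Y ω| ∂μ := abs_integral_le_integral_abs
    _ = lpNorm (X • Y) 1 μ := (lpNorm_one_eq_integral_norm (hX.1.smul hY.1)).symm
    _ ≤ lpNorm X p μ * lpNorm Y q μ := lpNorm_smul_le_lpNorm_mul_lpNorm hX hY

lemma lpNorm_one_eq_two_mul_integral_of_integral_eq_zero {W : Ω → ℝ} (hW : Integrable W μ)
    (hW_zero : ∫ ω, W ω ∂μ = 0) :
    lpNorm W 1 μ = 2 * ∫ ω, {ω | 0 ≤ W ω}.indicator 1 ω * W ω ∂μ := by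
  have h_pos : ∀ ω, {ω | 0 ≤ W ω}.indicator 1 ω * W ω = max (W ω) 0 := fun ω ↦ by
    rcases le_or_gt 0 (W ω) with hω | hω
    · simp [hω]
    · simp [hω.not_ge, hω.le]
  have h_abs : ∀ ω, ‖W ω‖ = 2 * max (W ω) 0 - W ω := fun ω ↦ by
    rcases le_total 0 (W ω) with hω | hω
    · rw [Real.norm_of_nonneg hω, max_eq_left hω]; ring
    · rw [Real.norm_of_nonpos hω, max_eq_right hω]; ring
  simp only [lpNorm_one_eq_integral_norm hW.1, h_pos, h_abs]
  rw [integral_sub (hW.pos_part.const_mul 2) hW, hW_zero, sub_zero, integral_const_mul]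

lemma lpNorm_top_le_of_forall_norm_le (hf : AEStronglyMeasurable f μ) {M : ℝ} (hM : 0 ≤ M)
    (hfM : ∀ ω, ‖f ω‖ ≤ M) : lpNorm f ∞ μ ≤ M := by
  rw [← toReal_eLpNorm hf]
  exact toReal_le_of_le_ofReal hM (eLpNormEssSup_le_of_ae_bound (.of_forall hfM))

lemma measure_mul_lpNorm_lt_norm_le (hp : p ≠ 0) (hf : MemLp f p μ) {a : ℝ} (ha : 0 < a) :
    μ {ω | a ^ (-p⁻¹.toReal) * lpNorm f p μ < ‖f ω‖} ≤ .ofReal a := by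
  rcases eq_or_ne p ∞ with rfl | hp_top
  · have h_null : μ {ω | lpNorm f ∞ μ < ‖f ω‖} = 0 := by
      simpa only [ae_iff, not_le] using ae_le_lpNorm_exponent_top hf
    simp [h_null]
  rcases (lpNorm_nonneg (f := f) (p := p) (μ := μ)).eq_or_lt with h_zero | h_pos
  · have h_null : μ {ω | f ω ≠ 0} = 0 := ae_iff.1 ((lpNorm_eq_zero hf hp).1 h_zero.symm)
    simpa [← h_zero] using h_null.trans_le zero_le
  have hp_pos : 0 < p.toReal := toReal_pos hp hp_top
  set M := a ^ (-p⁻¹.toReal) * lpNorm f p μ with hM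
  have hM_pos : 0 < M := by positivity
  have hM_pow : (M⁻¹ * lpNorm f p μ) ^ p.toReal = a := by
    rw [hM, mul_inv, inv_mul_cancel_right₀ h_pos.ne', Real.rpow_neg ha.le, inv_inv, toReal_inv,
      Real.rpow_inv_rpow ha.le hp_pos.ne']
  calc μ {ω | M < ‖f ω‖} ≤ μ {ω | .ofReal M ≤ ‖f ω‖ₑ} := by
        refine measure_mono fun ω hω ↦ ?_
        rw [Set.mem_ofPred_eq, ← ofReal_norm]
        exact ofReal_le_ofReal (le_of_lt hω)
    _ ≤ (ENNReal.ofReal M)⁻¹ ^ p.toReal * eLpNorm f p μ ^ p.toReal :=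
        meas_ge_le_mul_pow_eLpNorm_enorm μ hp hp_top hf.1 (by simpa using hM_pos) (by simp)
    _ = .ofReal a := by
        rw [← ofReal_lpNorm hf, ← ofReal_inv_of_pos hM_pos, ← mul_rpow_of_nonneg _ _ hp_pos.le,
          ← ofReal_mul (by positivity), ofReal_rpow_of_nonneg (by positivity) hp_pos.le, hM_pow]

lemma lpNorm_indicator_le_mul_rpow_of_measure_le (hr : r ≠ 0) (hrp : r ≤ p) (hf : MemLp f p μ)
    {S : Set Ω} (hS : MeasurableSet S) {a : ℝ} (ha : 0 < a) (hSa : μ S ≤ .ofReal a) :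
    lpNorm (S.indicator f) r μ ≤ a ^ (r⁻¹.toReal - p⁻¹.toReal) * lpNorm f p μ := by
  have h_exp : 0 ≤ r⁻¹.toReal - p⁻¹.toReal :=
    sub_nonneg.2 (toReal_mono (inv_ne_top.2 hr) (ENNReal.inv_le_inv.2 hrp))
  rw [← toReal_eLpNorm (hf.1.indicator hS)]
  refine toReal_le_of_le_ofReal (mul_nonneg (by positivity) lpNorm_nonneg) ?_
  calc eLpNorm (S.indicator f) r μ
      = eLpNorm f r (μ.restrict S) := eLpNorm_indicator_eq_eLpNorm_restrict hS
    _ ≤ eLpNorm f p (μ.restrict S) * μ S ^ (r⁻¹.toReal - p⁻¹.toReal) := by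
        simpa using eLpNorm_le_eLpNorm_mul_rpow_measure_univ hrp hf.1.restrict
    _ ≤ eLpNorm f p μ * .ofReal a ^ (r⁻¹.toReal - p⁻¹.toReal) := by
        gcongr
        exact Measure.restrict_le_self
    _ = .ofReal (a ^ (r⁻¹.toReal - p⁻¹.toReal) * lpNorm f p μ) := by
        rw [← ofReal_lpNorm hf, ofReal_rpow_of_pos ha, mul_comm, ofReal_mul (by positivity)]

lemma exists_lpNorm_indicator_compl_top_le_and_lpNorm_indicator_le {m : MeasurableSpace Ω}
    (hm : m ≤ mΩ) (hr : r ≠ 0) (hrp : r ≤ p) (hfm : StronglyMeasurable[m] f) (hf : MemLp f p μ)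
    {a : ℝ} (ha : 0 < a) :
    ∃ S, MeasurableSet[m] S ∧ MemLp (Sᶜ.indicator f) ∞ μ ∧
      lpNorm (Sᶜ.indicator f) ∞ μ ≤ a ^ (-p⁻¹.toReal) * lpNorm f p μ ∧
      lpNorm (S.indicator f) r μ ≤ a ^ (r⁻¹.toReal - p⁻¹.toReal) * lpNorm f p μ := by
  set M := a ^ (-p⁻¹.toReal) * lpNorm f p μ
  have hM : 0 ≤ M := mul_nonneg (by positivity) lpNorm_nonneg
  set S : Set Ω := {ω | M < ‖f ω‖}
  have hS : MeasurableSet[m] S := hfm.norm.measurable measurableSet_Ioi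
  have h_le : ∀ ω, ‖Sᶜ.indicator f ω‖ ≤ M := fun ω ↦ by
    by_cases hω : ω ∈ S
    · simpa [hω] using hM
    · simpa [hω] using not_lt.1 hω
  have h_aesm : AEStronglyMeasurable[mΩ] (Sᶜ.indicator f) μ := hf.1.indicator (hm _ hS).compl
  exact ⟨S, hS, memLp_top_of_bound h_aesm M (.of_forall h_le),
    lpNorm_top_le_of_forall_norm_le h_aesm hM h_le,
    lpNorm_indicator_le_mul_rpow_of_measure_le hr hrp hf (hm _ hS) ha
      (measure_mul_lpNorm_lt_norm_le (hr.bot_lt.trans_le hrp).ne' hf ha)⟩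

lemma toReal_inv_add_toReal_inv_eq_one [HolderConjugate p q] :
    p⁻¹.toReal + q⁻¹.toReal = 1 := by
  have hp : p ≠ 0 := (zero_lt_one.trans_le (HolderConjugate.one_le p q)).ne'
  have hq : q ≠ 0 := (zero_lt_one.trans_le (HolderConjugate.one_le q p)).ne'
  rw [← toReal_add (inv_ne_top.2 hp) (inv_ne_top.2 hq), HolderConjugate.inv_add_inv_eq_one,
    toReal_one]

lemma toReal_inv_add_toReal_inv_le_one (hpq : p⁻¹ + q⁻¹ ≤ 1) :
    p⁻¹.toReal + q⁻¹.toReal ≤ 1 := by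
  have hp_inv : p⁻¹ ≠ ∞ := ne_top_of_le_ne_top one_ne_top (le_self_add.trans hpq)
  have hq_inv : q⁻¹ ≠ ∞ := ne_top_of_le_ne_top one_ne_top (le_add_self.trans hpq)
  rw [← toReal_add hp_inv hq_inv]
  exact toReal_le_of_le_ofReal zero_le_one (by simpa using hpq)

lemma inv_ofReal_add_inv_ofReal_le_one {s t : ℝ} (hs : 0 < s) (ht : 0 < t)
    (hst : s⁻¹ + t⁻¹ ≤ 1) : (ENNReal.ofReal s)⁻¹ + (ENNReal.ofReal t)⁻¹ ≤ 1 := by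
  rw [← ofReal_inv_of_pos hs, ← ofReal_inv_of_pos ht, ← ofReal_add (by positivity) (by positivity)]
  exact ofReal_le_one.2 hst

lemma exists_holderConjugate_le_of_inv_add_inv_le_one (hpq : p⁻¹ + q⁻¹ ≤ 1) :
    ∃ r ≤ p, HolderConjugate r q := by
  have hq : 1 ≤ q := ENNReal.inv_le_one.1 (le_add_self.trans hpq)
  have hq_inv : q⁻¹ ≠ ∞ := inv_ne_top.2 (zero_lt_one.trans_le hq).ne'
  exact ⟨(1 - q⁻¹)⁻¹, ENNReal.inv_le_iff_inv_le.1 (ENNReal.le_sub_of_add_le_right hq_inv hpq),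
    (HolderConjugate.inv_one_sub_inv' hq).symm⟩

lemma integrable_mul_of_inv_add_inv_le_one [IsFiniteMeasure μ] (hpq : p⁻¹ + q⁻¹ ≤ 1)
    {X Y : Ω → ℝ} (hX : MemLp X p μ) (hY : MemLp Y q μ) : Integrable (X * Y) μ := by
  obtain ⟨r, hrp, _⟩ := exists_holderConjugate_le_of_inv_add_inv_le_one hpq
  exact (hX.mono_exponent hrp).integrable_mul hY

end LpNorm

section Covariance

open ProbabilityTheory ENNReal

variable {Ω : Type*} {mΩ : MeasurableSpace Ω} {μ : Measure Ω} [IsProbabilityMeasure μ]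
  {X Y Z : Ω → ℝ} {p q : ℝ≥0∞}

lemma covariance_eq_sub_of_integrable (hX : Integrable X μ) (hY : Integrable Y μ)
    (hXY : Integrable (X * Y) μ) :
    cov[X, Y; μ] = ∫ ω, (X * Y) ω ∂μ - (∫ ω, X ω ∂μ) * ∫ ω, Y ω ∂μ := by
  have hXY' : Integrable (fun ω ↦ X ω * Y ω) μ := hXY
  have h_expand : ∀ ω, (X ω - μ[X]) * (Y ω - μ[Y])
      = X ω * Y ω - μ[X] * Y ω - (X ω * μ[Y] - μ[X] * μ[Y]) := fun ω ↦ by ring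
  simp only [covariance, h_expand]
  rw [integral_sub (by fun_prop) (by fun_prop), integral_sub hXY' (by fun_prop),
    integral_sub (by fun_prop) (by fun_prop), integral_const_mul, integral_mul_const]
  simp

lemma abs_covariance_le_two_mul_lpNorm_mul_lpNorm [HolderConjugate p q]
    (hX : MemLp X p μ) (hY : MemLp Y q μ) :
    |cov[X, Y; μ]| ≤ 2 * lpNorm X p μ * lpNorm Y q μ := by
  have hp : 1 ≤ p := HolderConjugate.one_le p q
  have hq : 1 ≤ q := HolderConjugate.one_le q p
  rw [covariance_eq_sub_of_integrable (hX.integrable hp) (hY.integrable hq) (hX.integrable_mul hY)]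
  calc _ ≤ |∫ ω, (X * Y) ω ∂μ| + |∫ ω, X ω ∂μ| * |∫ ω, Y ω ∂μ| := by
        rw [← abs_mul]; exact norm_sub_le (∫ ω, (X * Y) ω ∂μ) _
    _ ≤ lpNorm X p μ * lpNorm Y q μ + lpNorm X p μ * lpNorm Y q μ :=
        add_le_add (abs_integral_mul_le_lpNorm_mul_lpNorm hX hY)
          (mul_le_mul (norm_integral_le_lpNorm hp hX) (norm_integral_le_lpNorm hq hY)
            (abs_nonneg _) lpNorm_nonneg)
    _ = _ := by ring

lemma covariance_add_left_of_integrable (hX : Integrable X μ) (hY : Integrable Y μ)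
    (hZ : Integrable Z μ) (hXZ : Integrable (X * Z) μ) (hYZ : Integrable (Y * Z) μ) :
    cov[X + Y, Z; μ] = cov[X, Z; μ] + cov[Y, Z; μ] := by
  rw [covariance_eq_sub_of_integrable (hX.add hY) hZ (by rw [add_mul]; exact hXZ.add hYZ),
    covariance_eq_sub_of_integrable hX hZ hXZ, covariance_eq_sub_of_integrable hY hZ hYZ, add_mul,
    integral_add' hX hY, integral_add' hXZ hYZ]
  ring

lemma covariance_indicator_one_indicator_one {A B : Set Ω}
    (hA : MeasurableSet A) (hB : MeasurableSet B) :
    cov[A.indicator 1, B.indicator 1; μ] = μ.real (A ∩ B) - μ.real A * μ.real B := by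
  have h_int {S : Set Ω} (hS : MeasurableSet S) : Integrable (S.indicator (1 : Ω → ℝ)) μ :=
    (integrable_const 1).indicator hS
  have h_mul : A.indicator (1 : Ω → ℝ) * B.indicator 1 = (A ∩ B).indicator 1 :=
    (Set.inter_indicator_one).symm
  have h_int_mul : Integrable (A.indicator (1 : Ω → ℝ) * B.indicator 1) μ := by
    rw [h_mul]; exact h_int (hA.inter hB)
  rw [covariance_eq_sub_of_integrable (h_int hA) (h_int hB) h_int_mul, h_mul,
    integral_indicator_one (hA.inter hB), integral_indicator_one hA, integral_indicator_one hB]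

lemma covariance_eq_integral_mul_condExp_sub {m : MeasurableSpace Ω} (hm : m ≤ mΩ)
    {U V : Ω → ℝ} (hU : Measurable[m] U) (hU_top : MemLp U ∞ μ) (hV : Integrable V μ) :
    cov[U, V; μ] = ∫ ω, U ω * ((μ[V | m]) ω - μ[V]) ∂μ := by
  have h_pull : ∫ ω, (U * μ[V | m]) ω ∂μ = ∫ ω, (U * V) ω ∂μ := by
    rw [← integral_condExp hm (f := U * V)]
    exact integral_congr_ae (condExp_mul_of_stronglyMeasurable_left hU.stronglyMeasurable
      (hV.mul_of_top_right hU_top) hV).symm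
  rw [covariance_eq_sub_of_integrable (hU_top.integrable le_top) hV (hV.mul_of_top_right hU_top),
    ← h_pull, ← integral_mul_const,
    ← integral_sub (integrable_condExp.mul_of_top_right hU_top)
      ((hU_top.integrable le_top).mul_const _)]
  simp only [Pi.mul_apply, mul_sub]

lemma exists_abs_covariance_le_mul_abs_covariance_indicator {m : MeasurableSpace Ω}
    (hm : m ≤ mΩ) {U V : Ω → ℝ} (hU : Measurable[m] U) (hU_top : MemLp U ∞ μ)
    (hV : Integrable V μ) :
    ∃ A, MeasurableSet[m] A ∧
      |cov[U, V; μ]| ≤ 2 * lpNorm U ∞ μ * |cov[A.indicator 1, V; μ]| := by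
  set W : Ω → ℝ := fun ω ↦ (μ[V | m]) ω - μ[V] with hW
  set A : Set Ω := {ω | 0 ≤ W ω}
  have hW_int : Integrable W μ := integrable_condExp.sub (integrable_const _)
  have hW_zero : ∫ ω, W ω ∂μ = 0 := by
    rw [hW, integral_sub integrable_condExp (integrable_const _), integral_condExp hm]
    simp
  have hA : MeasurableSet[m] A :=
    (stronglyMeasurable_condExp.measurable.sub_const _) measurableSet_Ici
  have hA_meas : Measurable[m] (A.indicator (1 : Ω → ℝ)) := measurable_one.indicator hA
  have hA_top : MemLp (A.indicator (1 : Ω → ℝ)) ∞ μ :=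
    (memLp_top_const (1 : ℝ)).indicator (hm _ hA)
  have hW_norm : lpNorm W 1 μ = 2 * cov[A.indicator 1, V; μ] := by
    rw [covariance_eq_integral_mul_condExp_sub hm hA_meas hA_top hV,
      lpNorm_one_eq_two_mul_integral_of_integral_eq_zero hW_int hW_zero]
  refine ⟨A, hA, ?_⟩
  calc |cov[U, V; μ]| = |∫ ω, U ω * W ω ∂μ| :=
        congrArg _ (covariance_eq_integral_mul_condExp_sub hm hU hU_top hV)
    _ ≤ lpNorm U ∞ μ * lpNorm W 1 μ :=
        abs_integral_mul_le_lpNorm_mul_lpNorm hU_top (memLp_one_iff_integrable.2 hW_int)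
    _ = 2 * lpNorm U ∞ μ * cov[A.indicator 1, V; μ] := by rw [hW_norm]; ring
    _ ≤ 2 * lpNorm U ∞ μ * |cov[A.indicator 1, V; μ]| :=
        mul_le_mul_of_nonneg_left (le_abs_self _) (mul_nonneg zero_le_two lpNorm_nonneg)

theorem abs_covariance_le_of_forall_memLp_top {m : MeasurableSpace Ω} (hm : m ≤ mΩ)
    (hpq : p⁻¹ + q⁻¹ ≤ 1) (hX : Measurable[m] X) (hXp : MemLp X p μ)
    (hY : MemLp Y q μ) {a C : ℝ} (ha : 0 < a) (hC : 0 ≤ C)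
    (h_top : ∀ U, Measurable[m] U → MemLp U ∞ μ →
      |cov[U, Y; μ]| ≤ C * a ^ (1 - q⁻¹.toReal) * lpNorm U ∞ μ * lpNorm Y q μ) :
    |cov[X, Y; μ]| ≤
      (C + 2) * a ^ (1 - p⁻¹.toReal - q⁻¹.toReal) * lpNorm X p μ * lpNorm Y q μ := by
  obtain ⟨r, hrp, h_conj⟩ := exists_holderConjugate_le_of_inv_add_inv_le_one hpq
  have hr : 1 ≤ r := HolderConjugate.one_le r q
  have hq : 1 ≤ q := HolderConjugate.one_le q r
  have hr_ne : r ≠ 0 := (zero_lt_one.trans_le hr).ne'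
  have hr_inv : r⁻¹.toReal = 1 - q⁻¹.toReal :=
    eq_sub_of_add_eq toReal_inv_add_toReal_inv_eq_one
  obtain ⟨S, hS, hU_top, hU_le, hT_le⟩ :=
    exists_lpNorm_indicator_compl_top_le_and_lpNorm_indicator_le hm hr_ne hrp
      hX.stronglyMeasurable hXp ha
  set U := Sᶜ.indicator X
  set T := S.indicator X
  have hU : Measurable[m] U := hX.indicator hS.compl
  have hT : MemLp T r μ := (hXp.mono_exponent hrp).indicator (hm _ hS)
  have h_split : X = U + T := (Set.indicator_compl_add_self S X).symm
  have hY_int : Integrable Y μ := hY.integrable hq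
  have hY_norm : 0 ≤ lpNorm Y q μ := lpNorm_nonneg
  have h_rpow : a ^ (1 - q⁻¹.toReal) * a ^ (-p⁻¹.toReal) = a ^ (1 - q⁻¹.toReal - p⁻¹.toReal) := by
    rw [← Real.rpow_add ha, sub_eq_add_neg _ p⁻¹.toReal]
  calc |cov[X, Y; μ]| = |cov[U, Y; μ] + cov[T, Y; μ]| := by
        rw [h_split, covariance_add_left_of_integrable (hU_top.integrable le_top)
          (hT.integrable hr) hY_int (hY_int.mul_of_top_right hU_top) (hT.integrable_mul hY)]
    _ ≤ C * a ^ (1 - q⁻¹.toReal) * lpNorm U ∞ μ * lpNorm Y q μ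
        + 2 * lpNorm T r μ * lpNorm Y q μ :=
        (abs_add_le _ _).trans (add_le_add (h_top U hU hU_top)
          (abs_covariance_le_two_mul_lpNorm_mul_lpNorm hT hY))
    _ ≤ C * a ^ (1 - q⁻¹.toReal) * (a ^ (-p⁻¹.toReal) * lpNorm X p μ) * lpNorm Y q μ
        + 2 * (a ^ (r⁻¹.toReal - p⁻¹.toReal) * lpNorm X p μ) * lpNorm Y q μ := by
        gcongr
    _ = (C + 2) * a ^ (1 - p⁻¹.toReal - q⁻¹.toReal) * lpNorm X p μ * lpNorm Y q μ := by
        rw [hr_inv, sub_right_comm 1 p⁻¹.toReal]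
        linear_combination C * lpNorm X p μ * lpNorm Y q μ * h_rpow

end Covariance

section Alpha

open ProbabilityTheory ENNReal Filter Topology

variable {Ω : Type*} {m₁ m₂ : MeasurableSpace Ω} {mΩ : MeasurableSpace Ω} {μ : Measure Ω}
  [IsProbabilityMeasure μ] {X Y : Ω → ℝ} {p q : ℝ≥0∞}

lemma abs_measureReal_inter_sub_mul_le_one (A B : Set Ω) :
    |μ.real (A ∩ B) - μ.real A * μ.real B| ≤ 1 :=
  abs_sub_le_of_nonneg_of_le measureReal_nonneg measureReal_le_one (by positivity)
    (mul_le_one₀ measureReal_le_one measureReal_nonneg measureReal_le_one)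

lemma abs_measureReal_inter_sub_mul_le_alphaCoef {A B : Set Ω} (hA : MeasurableSet[m₁] A)
    (hB : MeasurableSet[m₂] B) :
    |μ.real (A ∩ B) - μ.real A * μ.real B| ≤ alphaCoef m₁ m₂ μ := by
  refine le_csSup ⟨1, ?_⟩ ⟨A, B, hA, hB, rfl⟩
  rintro _ ⟨A, B, -, -, rfl⟩
  exact abs_measureReal_inter_sub_mul_le_one A B

variable (m₁ m₂ μ) in
lemma alphaCoef_nonneg : 0 ≤ alphaCoef m₁ m₂ μ :=
  (abs_nonneg _).trans <| abs_measureReal_inter_sub_mul_le_alphaCoef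
    (@MeasurableSet.empty _ m₁) (@MeasurableSet.empty _ m₂)

theorem abs_covariance_le_four_mul_alphaCoef (hm₁ : m₁ ≤ mΩ) (hm₂ : m₂ ≤ mΩ)
    (hX : Measurable[m₁] X) (hY : Measurable[m₂] Y) (hX_top : MemLp X ∞ μ) (hY_top : MemLp Y ∞ μ) :
    |cov[X, Y; μ]| ≤ 4 * alphaCoef m₁ m₂ μ * lpNorm X ∞ μ * lpNorm Y ∞ μ := by
  have hX_norm : 0 ≤ lpNorm X ∞ μ := lpNorm_nonneg
  have hY_norm : 0 ≤ lpNorm Y ∞ μ := lpNorm_nonneg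
  obtain ⟨A, hA, hXA⟩ := exists_abs_covariance_le_mul_abs_covariance_indicator hm₁ hX hX_top
    (hY_top.integrable le_top)
  obtain ⟨B, hB, hYB⟩ := exists_abs_covariance_le_mul_abs_covariance_indicator hm₂ hY hY_top
    (V := A.indicator 1) ((integrable_const 1).indicator (hm₁ _ hA))
  calc |cov[X, Y; μ]| ≤ 2 * lpNorm X ∞ μ * |cov[A.indicator 1, Y; μ]| := hXA
    _ ≤ 2 * lpNorm X ∞ μ * (2 * lpNorm Y ∞ μ * |cov[A.indicator 1, B.indicator 1; μ]|) := by
        rw [covariance_comm (A.indicator 1) Y, covariance_comm (A.indicator 1)]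
        gcongr
    _ ≤ 2 * lpNorm X ∞ μ * (2 * lpNorm Y ∞ μ * alphaCoef m₁ m₂ μ) := by
        rw [covariance_indicator_one_indicator_one (hm₁ _ hA) (hm₂ _ hB)]
        gcongr
        exact abs_measureReal_inter_sub_mul_le_alphaCoef hA hB
    _ = _ := by ring

theorem abs_covariance_le_of_alphaCoef_le (hm₁ : m₁ ≤ mΩ) (hm₂ : m₂ ≤ mΩ)
    (hX : Measurable[m₁] X) (hY : Measurable[m₂] Y) (hpq : p⁻¹ + q⁻¹ ≤ 1)
    (hXp : MemLp X p μ) (hYq : MemLp Y q μ) {a : ℝ} (ha : 0 < a) (hαa : alphaCoef m₁ m₂ μ ≤ a) :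
    |cov[X, Y; μ]| ≤ 8 * a ^ (1 - p⁻¹.toReal - q⁻¹.toReal) * lpNorm X p μ * lpNorm Y q μ := by
  have h_bounded_bounded : ∀ U, Measurable[m₁] U → MemLp U ∞ μ →
      ∀ V, Measurable[m₂] V → MemLp V ∞ μ →
        |cov[U, V; μ]| ≤ 4 * a ^ (1 - (∞ : ℝ≥0∞)⁻¹.toReal) * lpNorm U ∞ μ * lpNorm V ∞ μ := by
    intro U hU hU_top V hV hV_top
    have hU_norm : 0 ≤ lpNorm U ∞ μ := lpNorm_nonneg
    have hV_norm : 0 ≤ lpNorm V ∞ μ := lpNorm_nonneg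
    rw [inv_top, toReal_zero, sub_zero, Real.rpow_one]
    exact (abs_covariance_le_four_mul_alphaCoef hm₁ hm₂ hU hV hU_top hV_top).trans (by gcongr)
  have h_unbounded_bounded : ∀ V, Measurable[m₂] V → MemLp V ∞ μ →
      |cov[V, X; μ]| ≤ (4 + 2) * a ^ (1 - p⁻¹.toReal) * lpNorm V ∞ μ * lpNorm X p μ := by
    intro V hV hV_top
    have hp_top : p⁻¹ + ∞⁻¹ ≤ 1 := by simpa using le_self_add.trans hpq
    calc |cov[V, X; μ]| = |cov[X, V; μ]| := by rw [covariance_comm]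
      _ ≤ (4 + 2) * a ^ (1 - p⁻¹.toReal - (∞ : ℝ≥0∞)⁻¹.toReal)
          * lpNorm X p μ * lpNorm V ∞ μ :=
          abs_covariance_le_of_forall_memLp_top hm₁ hp_top hX hXp hV_top ha zero_le_four
            fun U hU hU_top ↦ h_bounded_bounded U hU hU_top V hV hV_top
      _ = _ := by rw [inv_top, toReal_zero, sub_zero, mul_right_comm]
  calc |cov[X, Y; μ]| = |cov[Y, X; μ]| := by rw [covariance_comm]
    _ ≤ (4 + 2 + 2) * a ^ (1 - q⁻¹.toReal - p⁻¹.toReal) * lpNorm Y q μ * lpNorm X p μ :=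
        abs_covariance_le_of_forall_memLp_top hm₂ ((add_comm _ _).trans_le hpq) hY hYq hXp ha
          (by positivity) h_unbounded_bounded
    _ = _ := by rw [sub_right_comm 1 q⁻¹.toReal]; ring

theorem stmt_2_general (hm₁ : m₁ ≤ mΩ) (hm₂ : m₂ ≤ mΩ)
    (hX : Measurable[m₁] X) (hY : Measurable[m₂] Y) (hpq : p⁻¹ + q⁻¹ ≤ 1)
    (hXp : MemLp X p μ) (hYq : MemLp Y q μ) :
    |(∫ ω, X ω * Y ω ∂μ) - (∫ ω, X ω ∂μ) * ∫ ω, Y ω ∂μ| ≤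
      8 * alphaCoef m₁ m₂ μ ^ (1 - p⁻¹.toReal - q⁻¹.toReal) * lpNorm X p μ * lpNorm Y q μ := by
  have hp : 1 ≤ p := ENNReal.inv_le_one.1 (le_self_add.trans hpq)
  have hq : 1 ≤ q := ENNReal.inv_le_one.1 (le_add_self.trans hpq)
  have h_exp : 0 ≤ 1 - p⁻¹.toReal - q⁻¹.toReal := by
    linarith [toReal_inv_add_toReal_inv_le_one hpq]
  have h_cont : Continuous fun a : ℝ ↦
      8 * a ^ (1 - p⁻¹.toReal - q⁻¹.toReal) * lpNorm X p μ * lpNorm Y q μ := by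
    have := Real.continuous_rpow_const h_exp
    fun_prop
  have h_cov := covariance_eq_sub_of_integrable (hXp.integrable hp) (hYq.integrable hq)
    (integrable_mul_of_inv_add_inv_le_one hpq hXp hYq)
  refine (congrArg abs h_cov).ge.trans ?_
  refine ge_of_tendsto (h_cont.continuousWithinAt (s := Set.Ioi (alphaCoef m₁ m₂ μ))).tendsto ?_
  filter_upwards [self_mem_nhdsWithin] with a ha
  exact abs_covariance_le_of_alphaCoef_le hm₁ hm₂ hX hY hpq hXp hYq
    ((alphaCoef_nonneg m₁ m₂ μ).trans_lt ha) (le_of_lt ha)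

end Alpha

/-- Covariance inequality for strong mixing: if `X` is `m₁`-measurable, `Y` is
`m₂`-measurable, `1/p + 1/p′ < 1` and `E|X|^p, E|Y|^{p′} < ∞`, then
`|E[XY] − E[X]E[Y]| ≤ 8 α^{1/r} (E|X|^p)^{1/p} (E|Y|^{p′})^{1/p′}`,
where `1/r = 1 − 1/p − 1/p′`. -/
theorem stmt_2 {Ω : Type*} (m₁ m₂ : MeasurableSpace Ω)
    [mΩ : MeasurableSpace Ω] (μ : Measure Ω) [IsProbabilityMeasure μ]
    (hm₁ : m₁ ≤ mΩ) (hm₂ : m₂ ≤ mΩ)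
    (X Y : Ω → ℝ) (hX : Measurable[m₁] X) (hY : Measurable[m₂] Y)
    (p p' : ℝ) (hp : 1 < p) (hp' : 1 < p') (hpp' : 1 / p + 1 / p' < 1)
    (hXp : Integrable (fun ω => |X ω| ^ p) μ)
    (hYp' : Integrable (fun ω => |Y ω| ^ p') μ) :
    |(∫ ω, X ω * Y ω ∂μ) - (∫ ω, X ω ∂μ) * ∫ ω, Y ω ∂μ| ≤
      8 * alphaCoef m₁ m₂ μ ^ (1 - 1 / p - 1 / p') *
        (∫ ω, |X ω| ^ p ∂μ) ^ (1 / p) * (∫ ω, |Y ω| ^ p' ∂μ) ^ (1 / p') := by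
  have hp₀ : 0 < p := zero_lt_one.trans hp
  have hp'₀ : 0 < p' := zero_lt_one.trans hp'
  have hX_meas : AEStronglyMeasurable X μ := (hX.mono hm₁ le_rfl).aestronglyMeasurable
  have hY_meas : AEStronglyMeasurable Y μ := (hY.mono hm₂ le_rfl).aestronglyMeasurable
  have h_inv : (ENNReal.ofReal p)⁻¹ + (ENNReal.ofReal p')⁻¹ ≤ 1 :=
    inv_ofReal_add_inv_ofReal_le_one hp₀ hp'₀ (by simpa only [one_div] using hpp'.le)
  simpa [lpNorm_ofReal_eq_integral_norm_rpow, hX_meas, hY_meas, hp₀, hp'₀, hp₀.le, hp'₀.le] using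
    stmt_2_general hm₁ hm₂ hX hY h_inv
      ((memLp_ofReal_iff_integrable_norm_rpow hX_meas hp₀).2 hXp)
      ((memLp_ofReal_iff_integrable_norm_rpow hY_meas hp'₀).2 hYp')
end

section
/- Let N₁, N₂, T be positive integers. Define the N₁T×N₁T matrices ℍ₁ := I_{N₁} ⊗ ((N₂ I_T + J_T)/T) + (1/T) J_{N₁} ⊗ I_T, 𝔼₁ := I_T − (1/(N₂ + T)) J_T, and G := (1/(N₁ + N₂)) ( I_T + (N₁/(N₂(N₁ + N₂ + T))) J_T ). Then ℍ₁ is invertible and ℍ₁⁻¹ = (T/N₂) · ( I_{N₁} ⊗ 𝔼₁ − J_{N₁} ⊗ (𝔼₁ G 𝔼₁) ). -/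
open Matrix
open scoped Kronecker

/-- The `n × n` all-ones matrix `J_n = ι_n ι_nᵀ`. -/
noncomputable def Jmat (n : ℕ) : Matrix (Fin n) (Fin n) ℝ :=
  Matrix.of fun _ _ => (1 : ℝ)

/-- `ℍ₁ = I_{N₁} ⊗ ((N₂ I_T + J_T)/T) + (1/T) J_{N₁} ⊗ I_T`. -/
noncomputable def Hmat (N₁ N₂ T : ℕ) : Matrix (Fin N₁ × Fin T) (Fin N₁ × Fin T) ℝ :=
  (1 : Matrix (Fin N₁) (Fin N₁) ℝ) ⊗ₖ
      ((T : ℝ)⁻¹ • ((N₂ : ℝ) • (1 : Matrix (Fin T) (Fin T) ℝ) + Jmat T)) +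
    (T : ℝ)⁻¹ • (Jmat N₁ ⊗ₖ (1 : Matrix (Fin T) (Fin T) ℝ))

/-- `𝔼₁ = I_T − (1/(N₂ + T)) J_T`. -/
noncomputable def Emat (N₂ T : ℕ) : Matrix (Fin T) (Fin T) ℝ :=
  1 - ((N₂ : ℝ) + T)⁻¹ • Jmat T

/-- `G = (1/(N₁ + N₂)) (I_T + (N₁/(N₂(N₁ + N₂ + T))) J_T)`. -/
noncomputable def Gmat (N₁ N₂ T : ℕ) : Matrix (Fin T) (Fin T) ℝ :=
  ((N₁ : ℝ) + N₂)⁻¹ • (1 + ((N₁ : ℝ) / ((N₂ : ℝ) * ((N₁ : ℝ) + N₂ + T))) • Jmat T)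

/-!
All-ones matrices satisfy `J * J = n • J`. Hence, for `A = (N₂ I + J) / T` and `B = I / T`, the
identity `(I ⊗ A + J ⊗ B) (I ⊗ C - J ⊗ D) = I` follows from `A C = I` and `(A + N₁ B) D = B C`.
With `C = (T / N₂) 𝔼₁`, the first equation is `(N₂ I + J) 𝔼₁ = N₂ I`; this gives
`((N₁ + N₂) I + J) 𝔼₁ = N₂ I + N₁ 𝔼₁`, and `G` is exactly the inverse of the right-hand side,
so `D = (T / N₂) 𝔼₁ G 𝔼₁` solves the second.
-/

section

variable {K A : Type*} [Field K] [Ring A] [Algebra K A]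

theorem smul_one_add_smul_mul_one_sub_smul {a b c : K} {e : A} (he : e * e = c • e)
    (habc : a + b * c ≠ 0) :
    (a • 1 + b • e) * (1 - (b / (a + b * c)) • e) = a • 1 := by
  simp only [add_mul, mul_sub, smul_mul_assoc, mul_smul_comm, one_mul, mul_one, he, smul_smul]
  match_scalars
  · ring
  · field_simp
    ring

end

section

variable {R m n : Type*} [CommRing R] [Fintype m] [DecidableEq m] [Fintype n] [DecidableEq n]

theorem one_kronecker_add_kronecker_mul_eq_one {c : R} {P : Matrix m m R}
    {A B C D : Matrix n n R} (hP : P * P = c • P) (hAC : A * C = 1)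
    (hD : (A + c • B) * D = B * C) :
    (1 ⊗ₖ A + P ⊗ₖ B) * (1 ⊗ₖ C - P ⊗ₖ D) = 1 := by
  calc (1 ⊗ₖ A + P ⊗ₖ B) * (1 ⊗ₖ C - P ⊗ₖ D)
      = 1 ⊗ₖ (A * C) + P ⊗ₖ (B * C) - P ⊗ₖ ((A + c • B) * D) := by
        simp only [add_mul, mul_sub, ← mul_kronecker_mul, one_mul, mul_one, hP, smul_mul_assoc,
          kronecker_add, kronecker_smul, smul_kronecker]
    _ = 1 := by rw [hD, add_sub_cancel_right, hAC, one_kronecker_one]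

end

theorem Jmat_mul_self (n : ℕ) : Jmat n * Jmat n = (n : ℝ) • Jmat n := by
  ext i j
  simp [Jmat, mul_apply]

theorem smul_one_add_Jmat_mul_Emat {N₂ T : ℕ} (h : (N₂ : ℝ) + T ≠ 0) :
    ((N₂ : ℝ) • 1 + Jmat T) * Emat N₂ T = (N₂ : ℝ) • 1 := by
  simpa [Emat] using
    smul_one_add_smul_mul_one_sub_smul (a := (N₂ : ℝ)) (b := 1) (Jmat_mul_self T) (by simpa using h)

theorem smul_one_add_smul_Emat_mul_Gmat (N₁ : ℕ) {N₂ : ℕ} (T : ℕ) (h₂ : N₂ ≠ 0) :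
    ((N₂ : ℝ) • 1 + (N₁ : ℝ) • Emat N₂ T) * Gmat N₁ N₂ T = 1 := by
  set a : ℝ := N₁ + N₂ with ha
  set b : ℝ := -(N₁ / (N₂ + T)) with hb
  have ha₀ : a ≠ 0 := by positivity
  have hab : a + b * T = N₂ * (a + T) / (N₂ + T) := by
    rw [ha, hb]
    field_simp
    ring
  have hab₀ : a + b * T ≠ 0 := by
    rw [hab]
    positivity
  have hE : (N₂ : ℝ) • 1 + (N₁ : ℝ) • Emat N₂ T = a • 1 + b • Jmat T := by
    rw [Emat, ha, hb]
    module
  have hG : Gmat N₁ N₂ T = a⁻¹ • (1 - (b / (a + b * T)) • Jmat T) := by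
    have hcoeff : b / (a + b * T) = -(N₁ / (N₂ * (a + T))) := by
      rw [hab, hb]
      field_simp
    rw [hcoeff, neg_smul, sub_neg_eq_add, Gmat]
  rw [hE, hG, mul_smul_comm, smul_one_add_smul_mul_one_sub_smul (Jmat_mul_self T) hab₀,
    inv_smul_smul₀ ha₀]

theorem smul_one_add_Jmat_add_smul_one_mul_Emat_mul_Gmat_mul_Emat (N₁ : ℕ) {N₂ : ℕ} (T : ℕ)
    (h₂ : N₂ ≠ 0) :
    ((N₂ : ℝ) • 1 + Jmat T + (N₁ : ℝ) • 1) * (Emat N₂ T * Gmat N₁ N₂ T * Emat N₂ T) =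
      Emat N₂ T := by
  have hE := smul_one_add_Jmat_mul_Emat (N₂ := N₂) (T := T) (by positivity)
  rw [← mul_assoc, ← mul_assoc, add_mul, hE, smul_mul_assoc, one_mul,
    smul_one_add_smul_Emat_mul_Gmat N₁ T h₂, one_mul]

/-- `ℍ₁` is invertible and `ℍ₁⁻¹ = (T/N₂)(I_{N₁} ⊗ 𝔼₁ − J_{N₁} ⊗ (𝔼₁ G 𝔼₁))`. -/
theorem stmt_10 (N₁ N₂ T : ℕ) (h₁ : 0 < N₁) (h₂ : 0 < N₂) (hT : 0 < T) :
    IsUnit (Hmat N₁ N₂ T) ∧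
      (Hmat N₁ N₂ T)⁻¹ =
        ((T : ℝ) / (N₂ : ℝ)) •
          ((1 : Matrix (Fin N₁) (Fin N₁) ℝ) ⊗ₖ Emat N₂ T -
            Jmat N₁ ⊗ₖ (Emat N₂ T * Gmat N₁ N₂ T * Emat N₂ T)) := by
  have hscale : (T : ℝ)⁻¹ * (T / N₂) * N₂ = 1 := by field_simp
  have hright : Hmat N₁ N₂ T * (((T : ℝ) / (N₂ : ℝ)) •
      (1 ⊗ₖ Emat N₂ T - Jmat N₁ ⊗ₖ (Emat N₂ T * Gmat N₁ N₂ T * Emat N₂ T))) = 1 := by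
    rw [Hmat, smul_sub, ← kronecker_smul, ← kronecker_smul, ← kronecker_smul]
    apply one_kronecker_add_kronecker_mul_eq_one (Jmat_mul_self N₁)
    · rw [smul_mul_smul_comm, smul_one_add_Jmat_mul_Emat (by positivity), smul_smul, hscale,
        one_smul]
    · rw [smul_comm, ← smul_add, smul_mul_smul_comm,
        smul_one_add_Jmat_add_smul_one_mul_Emat_mul_Gmat_mul_Emat N₁ T h₂.ne',
        smul_mul_smul_comm, one_mul]
  exact ⟨.of_mul_eq_one _ hright, inv_eq_right_inv hright⟩
end

section
/- Let N₁, N₂, T be positive integers and define the N₁T×N₁T matrix ℍ₁ := I_{N₁} ⊗ ((N₂ I_T + J_T)/T) + (1/T) J_{N₁} ⊗ I_T. Then ℍ₁ is invertible and its inverse satisfies ‖ℍ₁⁻¹‖_∞ < 2 · (T/N₂) · (1 + 2·(N₁/N₂)). -/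
open Matrix
open scoped Kronecker

/-- The operator norm induced by the `ℓ^∞` vector norms, i.e. the maximum
absolute row sum of the matrix. -/
noncomputable def rowSumNorm {m n : Type*} [Fintype n] (A : Matrix m n ℝ) : ℝ :=
  ⨆ i, ∑ j, |A i j|

/-!
If `b` commutes with `y` and `y² = r y`, then `(b + y)(b + r - y) = b (b + r)`, so that
`(b + y)⁻¹ = b⁻¹ (1 - y (b + r)⁻¹)` and the norm of `(b + y)⁻¹` is at most
`‖b⁻¹‖ (1 + ‖y‖ ‖(b + r)⁻¹‖)`. Now `ℍ₁ = a + x + y` with `a = N₂ / T` and commuting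
`x = I ⊗ J / T`, `y = J ⊗ I / T` that satisfy `x² = x` and `y² = (N₁ / T) y`, of norms at most `1`
and `N₁ / T`. Adding `x` to the scalars `a` and `a + N₁ / T` gives inverses of norm less than
`2 / a`, and adding `y` then costs the factor `1 + 2 N₁ / N₂`.
-/

section Algebra

open scoped Ring

theorem smul_mul_self_of_mul_self_eq_smul {R A : Type*} [CommSemiring R] [Semiring A]
    [Algebra R A] {y : A} {r : R} (c : R) (hy : y * y = r • y) :
    (c • y) * (c • y) = (c * r) • (c • y) := by
  rw [smul_mul_smul_comm, hy, smul_smul, smul_smul, mul_right_comm]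

variable {R A : Type*} [CommRing R] [Ring A] [Algebra R A] {b y : A} {r : R}

theorem add_mul_add_algebraMap_sub (hby : Commute b y) (hy : y * y = r • y) :
    (b + y) * (b + algebraMap R A r - y) = b * (b + algebraMap R A r) := by
  have hr : y * algebraMap R A r = y * y := by
    rw [hy, ← Algebra.commutes, ← Algebra.smul_def]
  rw [mul_sub, add_mul, mul_add y, add_mul, hr, hby.eq]
  abel

theorem isUnit_add_of_mul_self_eq_smul (hby : Commute b y) (hy : y * y = r • y)
    (hb : IsUnit b) (hbr : IsUnit (b + algebraMap R A r)) : IsUnit (b + y) := by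
  have hb' : Commute b (b + algebraMap R A r - y) :=
    ((Commute.refl b).add_right (Algebra.commute_algebraMap_right r b)).sub_right hby
  have hy' : Commute y (b + algebraMap R A r - y) :=
    (hby.symm.add_right (Algebra.commute_algebraMap_right r y)).sub_right (Commute.refl y)
  have hprod := add_mul_add_algebraMap_sub hby hy ▸ hb.mul hbr
  exact ((hb'.add_left hy').isUnit_mul_iff.mp hprod).1

theorem inverse_add_of_mul_self_eq_smul (hby : Commute b y) (hy : y * y = r • y)
    (hb : IsUnit b) (hbr : IsUnit (b + algebraMap R A r)) :
    (b + y)⁻¹ʳ = b⁻¹ʳ * (1 - y * (b + algebraMap R A r)⁻¹ʳ) := by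
  set c := b + algebraMap R A r with hc
  have hunit := isUnit_add_of_mul_self_eq_smul hby hy hb hbr
  have hfactor : 1 - y * c⁻¹ʳ = (c - y) * c⁻¹ʳ := by
    rw [sub_mul, Ring.mul_inverse_cancel c hbr]
  have hcomm : Commute (b + y) b := (Commute.refl b).add_left hby.symm
  rw [← mul_one (b + y)⁻¹ʳ, Ring.inverse_mul_eq_iff_eq_mul _ _ _ hunit, hfactor]
  apply hb.mul_left_cancel
  calc b * 1 = b * c * c⁻¹ʳ := by rw [Ring.mul_inverse_cancel_right _ _ hbr, mul_one]
    _ = (b + y) * (c - y) * c⁻¹ʳ := by rw [hc, add_mul_add_algebraMap_sub hby hy]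
    _ = (b + y) * (b * b⁻¹ʳ) * ((c - y) * c⁻¹ʳ) := by
      rw [Ring.mul_inverse_cancel b hb, mul_one, mul_assoc]
    _ = b * ((b + y) * (b⁻¹ʳ * ((c - y) * c⁻¹ʳ))) := by
      rw [← mul_assoc (b + y) b, hcomm.eq]
      simp only [mul_assoc]

variable {K : Type*} [Field K] [Algebra K A] {x : A} {a m n : K}

theorem inverse_algebraMap (a : K) : (algebraMap K A a)⁻¹ʳ = algebraMap K A a⁻¹ := by
  rcases eq_or_ne a 0 with rfl | ha
  · rw [_root_.inv_zero, map_zero, Ring.inverse_zero]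
  · exact Ring.inverse_unit (Units.map (algebraMap K A).toMonoidHom (Units.mk0 a ha))

theorem isUnit_algebraMap_add (ha : a ≠ 0) (ham : a + m ≠ 0) (hx : x * x = m • x) :
    IsUnit (algebraMap K A a + x) := by
  refine isUnit_add_of_mul_self_eq_smul (Algebra.commute_algebraMap_left a x) hx
    (ha.isUnit.map _) ?_
  rw [← map_add]
  exact ham.isUnit.map _

theorem isUnit_algebraMap_add_add (ha : a ≠ 0) (ham : a + m ≠ 0) (han : a + n ≠ 0)
    (hanm : a + n + m ≠ 0) (hxy : Commute x y) (hx : x * x = m • x) (hy : y * y = n • y) :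
    IsUnit (algebraMap K A a + x + y) := by
  refine isUnit_add_of_mul_self_eq_smul ((Algebra.commute_algebraMap_left a y).add_left hxy) hy
    (isUnit_algebraMap_add ha ham hx) ?_
  rw [add_right_comm, ← map_add]
  exact isUnit_algebraMap_add han hanm hx

end Algebra

section NormedAlgebra

open scoped Ring

variable {A : Type*} [NormedRing A] [NormOneClass A]

theorem norm_inverse_add_le_of_mul_self_eq_smul {R : Type*} [CommRing R] [Algebra R A]
    {b y : A} {r : R} (hby : Commute b y) (hy : y * y = r • y) (hb : IsUnit b)
    (hbr : IsUnit (b + algebraMap R A r)) :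
    ‖(b + y)⁻¹ʳ‖ ≤ ‖b⁻¹ʳ‖ * (1 + ‖y‖ * ‖(b + algebraMap R A r)⁻¹ʳ‖) := by
  rw [inverse_add_of_mul_self_eq_smul hby hy hb hbr]
  calc ‖b⁻¹ʳ * (1 - y * (b + algebraMap R A r)⁻¹ʳ)‖
      ≤ ‖b⁻¹ʳ‖ * ‖1 - y * (b + algebraMap R A r)⁻¹ʳ‖ := norm_mul_le _ _
    _ ≤ ‖b⁻¹ʳ‖ * (‖(1 : A)‖ + ‖y * (b + algebraMap R A r)⁻¹ʳ‖) := by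
      gcongr
      exact norm_sub_le _ _
    _ ≤ ‖b⁻¹ʳ‖ * (1 + ‖y‖ * ‖(b + algebraMap R A r)⁻¹ʳ‖) := by
      rw [norm_one]
      gcongr
      exact norm_mul_le _ _

variable [NormedAlgebra ℝ A] {x y : A} {a m n : ℝ}

theorem norm_inverse_algebraMap_add_lt (ha : 0 < a) (hx : x * x = m • x) (hxm : ‖x‖ ≤ m) :
    ‖(algebraMap ℝ A a + x)⁻¹ʳ‖ < 2 / a := by
  have hm : 0 ≤ m := (norm_nonneg x).trans hxm
  have ham : 0 < a + m := by positivity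
  calc ‖(algebraMap ℝ A a + x)⁻¹ʳ‖
      ≤ ‖(algebraMap ℝ A a)⁻¹ʳ‖ *
          (1 + ‖x‖ * ‖(algebraMap ℝ A a + algebraMap ℝ A m)⁻¹ʳ‖) := by
        refine norm_inverse_add_le_of_mul_self_eq_smul
          (Algebra.commute_algebraMap_left a x) hx (ha.ne'.isUnit.map _) ?_
        rw [← map_add]
        exact ham.ne'.isUnit.map _
    _ = a⁻¹ * (1 + ‖x‖ * (a + m)⁻¹) := by
        rw [← map_add, inverse_algebraMap, inverse_algebraMap, norm_algebraMap', norm_algebraMap',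
          Real.norm_of_nonneg (inv_nonneg.mpr ha.le), Real.norm_of_nonneg (inv_nonneg.mpr ham.le)]
    _ ≤ a⁻¹ * (1 + m / (a + m)) := by rw [div_eq_mul_inv]; gcongr
    _ < a⁻¹ * (1 + 1) := by
        gcongr
        exact (div_lt_one ham).mpr (lt_add_of_pos_left m ha)
    _ = 2 / a := by ring

theorem norm_inverse_algebraMap_add_add_lt (ha : 0 < a) (hxy : Commute x y)
    (hx : x * x = m • x) (hy : y * y = n • y) (hxm : ‖x‖ ≤ m) (hyn : ‖y‖ ≤ n) :
    ‖(algebraMap ℝ A a + x + y)⁻¹ʳ‖ < 2 / a * (1 + 2 * (n / a)) := by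
  have hm : 0 ≤ m := (norm_nonneg x).trans hxm
  have hn : 0 ≤ n := (norm_nonneg y).trans hyn
  have han : 0 < a + n := by positivity
  have hswap : algebraMap ℝ A a + x + algebraMap ℝ A n = algebraMap ℝ A (a + n) + x := by
    rw [add_right_comm, ← map_add]
  calc ‖(algebraMap ℝ A a + x + y)⁻¹ʳ‖
      ≤ ‖(algebraMap ℝ A a + x)⁻¹ʳ‖ *
          (1 + ‖y‖ * ‖(algebraMap ℝ A (a + n) + x)⁻¹ʳ‖) := by
        rw [← hswap]
        refine norm_inverse_add_le_of_mul_self_eq_smul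
          ((Algebra.commute_algebraMap_left a y).add_left hxy) hy
          (isUnit_algebraMap_add ha.ne' (by positivity) hx) ?_
        rw [hswap]
        exact isUnit_algebraMap_add han.ne' (by positivity) hx
    _ < 2 / a * (1 + ‖y‖ * ‖(algebraMap ℝ A (a + n) + x)⁻¹ʳ‖) := by
        gcongr
        exact norm_inverse_algebraMap_add_lt ha hx hxm
    _ ≤ 2 / a * (1 + n * (2 / (a + n))) := by
        gcongr
        exact (norm_inverse_algebraMap_add_lt han hx hxm).le
    _ ≤ 2 / a * (1 + n * (2 / a)) := by
        gcongr
        exact le_add_of_nonneg_right hn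
    _ = 2 / a * (1 + 2 * (n / a)) := by ring

end NormedAlgebra

section LinftyOpNorm

open scoped Matrix.Norms.Operator

theorem rowSumNorm_eq_norm {m n : Type*} [Fintype m] [Nonempty m] [Fintype n]
    (A : Matrix m n ℝ) : rowSumNorm A = ‖A‖ := by
  rw [linfty_opNorm_def, ← Finset.sup'_eq_sup Finset.univ_nonempty, Finset.sup'_univ_eq_ciSup,
    NNReal.coe_iSup]
  simp only [rowSumNorm, NNReal.coe_sum, coe_nnnorm, Real.norm_eq_abs]

theorem linfty_opNorm_kronecker_le {l m n p α : Type*} [Fintype l] [Fintype m] [Fintype n]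
    [Fintype p] [NonUnitalSeminormedRing α] (A : Matrix l m α) (B : Matrix n p α) :
    ‖A ⊗ₖ B‖ ≤ ‖A‖ * ‖B‖ := by
  rw [← coe_nnnorm, ← coe_nnnorm A, ← coe_nnnorm B, ← NNReal.coe_mul, NNReal.coe_le_coe]
  simp only [linfty_opNNNorm_def]
  refine Finset.sup_le fun ⟨i, k⟩ _ => ?_
  calc ∑ q : m × p, ‖(A ⊗ₖ B) (i, k) q‖₊
      ≤ ∑ q : m × p, ‖A i q.1‖₊ * ‖B k q.2‖₊ :=
        Finset.sum_le_sum fun q _ => nnnorm_mul_le _ _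
    _ = (∑ j, ‖A i j‖₊) * ∑ s, ‖B k s‖₊ := by
        rw [Fintype.sum_prod_type, Finset.sum_mul_sum]
    _ ≤ (Finset.univ.sup fun i => ∑ j, ‖A i j‖₊) * Finset.univ.sup fun k => ∑ s, ‖B k s‖₊ :=
        mul_le_mul' (Finset.le_sup (f := fun i => ∑ j, ‖A i j‖₊) (Finset.mem_univ i))
          (Finset.le_sup (f := fun k => ∑ s, ‖B k s‖₊) (Finset.mem_univ k))

theorem linfty_opNorm_one_kronecker_le {l n p α : Type*} [Fintype l] [DecidableEq l] [Nonempty l]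
    [Fintype n] [Fintype p] [SeminormedRing α] [NormOneClass α] (B : Matrix n p α) :
    ‖(1 : Matrix l l α) ⊗ₖ B‖ ≤ ‖B‖ := by
  simpa only [norm_one, one_mul] using linfty_opNorm_kronecker_le (1 : Matrix l l α) B

theorem linfty_opNorm_kronecker_one_le {l m n α : Type*} [Fintype l] [Fintype m]
    [Fintype n] [DecidableEq n] [Nonempty n] [SeminormedRing α] [NormOneClass α]
    (A : Matrix l m α) : ‖A ⊗ₖ (1 : Matrix n n α)‖ ≤ ‖A‖ := by
  simpa only [norm_one, mul_one] using linfty_opNorm_kronecker_le A (1 : Matrix n n α)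

end LinftyOpNorm

section Kronecker

variable {ι κ R : Type*} [Fintype ι] [Fintype κ] [CommSemiring R]

theorem one_kronecker_mul_self_of_mul_self_eq_smul [DecidableEq ι] {B : Matrix κ κ R} {r : R}
    (hB : B * B = r • B) :
    (1 : Matrix ι ι R) ⊗ₖ B * (1 : Matrix ι ι R) ⊗ₖ B = r • ((1 : Matrix ι ι R) ⊗ₖ B) := by
  rw [← mul_kronecker_mul, Matrix.one_mul, hB, kronecker_smul]

theorem kronecker_one_mul_self_of_mul_self_eq_smul [DecidableEq κ] {A : Matrix ι ι R} {r : R}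
    (hA : A * A = r • A) :
    A ⊗ₖ (1 : Matrix κ κ R) * A ⊗ₖ (1 : Matrix κ κ R) = r • (A ⊗ₖ (1 : Matrix κ κ R)) := by
  rw [← mul_kronecker_mul, Matrix.mul_one, hA, smul_kronecker]

theorem commute_one_kronecker_kronecker_one [DecidableEq ι] [DecidableEq κ]
    (A : Matrix ι ι R) (B : Matrix κ κ R) :
    Commute ((1 : Matrix ι ι R) ⊗ₖ B) (A ⊗ₖ (1 : Matrix κ κ R)) := by
  rw [commute_iff_eq, ← mul_kronecker_mul, ← mul_kronecker_mul]
  simp only [Matrix.one_mul, Matrix.mul_one]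

end Kronecker

/-- The all-ones matrix `J`, with an arbitrary index type in place of `Fin n`. -/
def onesMatrix (ι : Type*) : Matrix ι ι ℝ :=
  Matrix.of fun _ _ => 1

/-- The matrix `ℍ₁` with arbitrary finite index types in place of `Fin N₁` and `Fin T` and a real
parameter `a` in place of `N₂`. -/
noncomputable def twoWayMatrix (ι κ : Type*) [DecidableEq ι] [Fintype κ] [DecidableEq κ] (a : ℝ) :
    Matrix (ι × κ) (ι × κ) ℝ :=
  1 ⊗ₖ ((Fintype.card κ : ℝ)⁻¹ • (a • 1 + onesMatrix κ)) +
    (Fintype.card κ : ℝ)⁻¹ • (onesMatrix ι ⊗ₖ 1)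

section OnesMatrix

variable (ι κ : Type*) [Fintype ι]

theorem onesMatrix_mul_self :
    onesMatrix ι * onesMatrix ι = (Fintype.card ι : ℝ) • onesMatrix ι := by
  ext i j
  simp [onesMatrix, Matrix.mul_apply]

open scoped Matrix.Norms.Operator in
theorem linfty_opNorm_smul_onesMatrix [Nonempty ι] {c : ℝ} (hc : 0 ≤ c) :
    ‖c • onesMatrix ι‖ = c * Fintype.card ι := by
  have hones : ‖onesMatrix ι‖ = Fintype.card ι := by
    simp [linfty_opNorm_def, onesMatrix, Finset.sup_const Finset.univ_nonempty]
  rw [norm_smul, Real.norm_of_nonneg hc, hones]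

variable [DecidableEq ι] [Fintype κ] [DecidableEq κ]

theorem twoWayMatrix_eq_algebraMap_add_add (a : ℝ) :
    twoWayMatrix ι κ a = algebraMap ℝ _ (a / Fintype.card κ) +
      1 ⊗ₖ ((Fintype.card κ : ℝ)⁻¹ • onesMatrix κ) +
      ((Fintype.card κ : ℝ)⁻¹ • onesMatrix ι) ⊗ₖ 1 := by
  rw [twoWayMatrix, Algebra.algebraMap_eq_smul_one, smul_add, smul_smul, kronecker_add,
    kronecker_smul, one_kronecker_one, smul_kronecker, div_eq_inv_mul]

end OnesMatrix

theorem Hmat_eq_twoWayMatrix (N₁ N₂ T : ℕ) :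
    Hmat N₁ N₂ T = twoWayMatrix (Fin N₁) (Fin T) N₂ := by
  rw [twoWayMatrix, Fintype.card_fin]
  rfl

theorem stmt_11_general (ι κ : Type*) [Fintype ι] [DecidableEq ι] [Nonempty ι] [Fintype κ]
    [DecidableEq κ] [Nonempty κ] {a : ℝ} (ha : 0 < a) :
    IsUnit (twoWayMatrix ι κ a) ∧
      rowSumNorm (twoWayMatrix ι κ a)⁻¹ <
        2 * (Fintype.card κ / a) * (1 + 2 * (Fintype.card ι / a)) := by
  open scoped Matrix.Norms.Operator in
  have hT : (0 : ℝ) < Fintype.card κ := Nat.cast_pos.mpr Fintype.card_pos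
  set c := (Fintype.card κ : ℝ)⁻¹ with hc
  have hc₀ : 0 ≤ c := inv_nonneg.mpr hT.le
  set x : Matrix (ι × κ) (ι × κ) ℝ := 1 ⊗ₖ (c • onesMatrix κ)
  set y : Matrix (ι × κ) (ι × κ) ℝ := (c • onesMatrix ι) ⊗ₖ 1
  have hxy : Commute x y := commute_one_kronecker_kronecker_one _ _
  have hx : x * x = (c * Fintype.card κ) • x :=
    one_kronecker_mul_self_of_mul_self_eq_smul
      (smul_mul_self_of_mul_self_eq_smul c (onesMatrix_mul_self κ))
  have hy : y * y = (c * Fintype.card ι) • y :=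
    kronecker_one_mul_self_of_mul_self_eq_smul
      (smul_mul_self_of_mul_self_eq_smul c (onesMatrix_mul_self ι))
  have hxm : ‖x‖ ≤ c * Fintype.card κ :=
    (linfty_opNorm_one_kronecker_le _).trans (linfty_opNorm_smul_onesMatrix κ hc₀).le
  have hyn : ‖y‖ ≤ c * Fintype.card ι :=
    (linfty_opNorm_kronecker_one_le _).trans (linfty_opNorm_smul_onesMatrix ι hc₀).le
  rw [rowSumNorm_eq_norm, nonsing_inv_eq_ringInverse, twoWayMatrix_eq_algebraMap_add_add]
  refine ⟨isUnit_algebraMap_add_add (by positivity) (by positivity) (by positivity)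
    (by positivity) hxy hx hy, ?_⟩
  convert norm_inverse_algebraMap_add_add_lt (div_pos ha hT) hxy hx hy hxm hyn using 1
  rw [hc]
  field_simp

/-- `ℍ₁` is invertible and `‖ℍ₁⁻¹‖_∞ < 2 (T/N₂)(1 + 2 N₁/N₂)`. -/
theorem stmt_11 (N₁ N₂ T : ℕ) (h₁ : 0 < N₁) (h₂ : 0 < N₂) (hT : 0 < T) :
    IsUnit (Hmat N₁ N₂ T) ∧
      rowSumNorm (Hmat N₁ N₂ T)⁻¹ <
        2 * ((T : ℝ) / (N₂ : ℝ)) * (1 + 2 * ((N₁ : ℝ) / (N₂ : ℝ))) := by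
  have : NeZero N₁ := ⟨h₁.ne'⟩
  have : NeZero T := ⟨hT.ne'⟩
  simpa only [Hmat_eq_twoWayMatrix, Fintype.card_fin] using
    stmt_11_general (Fin N₁) (Fin T) (Nat.cast_pos.mpr h₂)
end

section
/- Let N₁, N₂, T be positive integers, and let D and C be the dummy-variable matrix and the constraint matrix of the three-way interacted fixed effects specification. Then Dᵀ D + C Cᵀ is block diagonal with three diagonal blocks: B₁ = N₂ I_{N₁T} + J_{N₁} ⊗ I_T + I_{N₁} ⊗ J_T (of size N₁T × N₁T), B₂ = N₁ I_{N₂T} + J_{N₂} ⊗ I_T + I_{N₂} ⊗ J_T (of size N₂T × N₂T), and B₃ = T I_{N₁N₂} + I_{N₁} ⊗ J_{N₂} + J_{N₁} ⊗ I_{N₂} (of size N₁N₂ × N₁N₂); i.e. all off-diagonal blocks of Dᵀ D + C Cᵀ with respect to the partition (N₁T, N₂T, N₁N₂) vanish. -/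
open Matrix
open scoped Kronecker

/-- The dummy-variable matrix `D = (D₁, D₂, D₃)` of the three-way interacted
fixed effects specification, with `D₁ = I_{N₁} ⊗ ι_{N₂} ⊗ I_T`,
`D₂ = ι_{N₁} ⊗ I_{N₂} ⊗ I_T`, `D₃ = I_{N₁} ⊗ I_{N₂} ⊗ ι_T`. -/
noncomputable def Dmat (N₁ N₂ T : ℕ) :
    Matrix (Fin N₁ × Fin N₂ × Fin T)
      ((Fin N₁ × Fin T) ⊕ (Fin N₂ × Fin T) ⊕ (Fin N₁ × Fin N₂)) ℝ :=
  Matrix.of fun r l =>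
    match r, l with
    | (i, _, t), Sum.inl (i', t') => if i = i' ∧ t = t' then 1 else 0
    | (_, j, t), Sum.inr (Sum.inl (j', t')) => if j = j' ∧ t = t' then 1 else 0
    | (i, j, _), Sum.inr (Sum.inr (i', j')) => if i = i' ∧ j = j' then 1 else 0

/-- The constraint matrix `C` of the three-way interacted fixed effects
specification. -/
noncomputable def Cmat (N₁ N₂ T : ℕ) :
    Matrix ((Fin N₁ × Fin T) ⊕ (Fin N₂ × Fin T) ⊕ (Fin N₁ × Fin N₂))
      (Fin T ⊕ Fin N₁ ⊕ Fin N₂) ℝ :=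
  Matrix.of fun r l =>
    match r, l with
    | Sum.inl (_, t), Sum.inl t' => if t = t' then 1 else 0
    | Sum.inl (i, _), Sum.inr (Sum.inl i') => if i = i' then 1 else 0
    | Sum.inl _, Sum.inr (Sum.inr _) => 0
    | Sum.inr (Sum.inl (_, t)), Sum.inl t' => -(if t = t' then 1 else 0)
    | Sum.inr (Sum.inl _), Sum.inr (Sum.inl _) => 0
    | Sum.inr (Sum.inl (j, _)), Sum.inr (Sum.inr j') => if j = j' then 1 else 0
    | Sum.inr (Sum.inr _), Sum.inl _ => 0
    | Sum.inr (Sum.inr (i, _)), Sum.inr (Sum.inl i') => -(if i = i' then 1 else 0)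
    | Sum.inr (Sum.inr (_, j)), Sum.inr (Sum.inr j') => -(if j = j' then 1 else 0)

/-- `B₁ = N₂ I_{N₁T} + J_{N₁} ⊗ I_T + I_{N₁} ⊗ J_T`. -/
noncomputable def Bmat1 (N₁ N₂ T : ℕ) : Matrix (Fin N₁ × Fin T) (Fin N₁ × Fin T) ℝ :=
  (N₂ : ℝ) • 1 + Jmat N₁ ⊗ₖ (1 : Matrix (Fin T) (Fin T) ℝ) +
    (1 : Matrix (Fin N₁) (Fin N₁) ℝ) ⊗ₖ Jmat T

/-- `B₂ = N₁ I_{N₂T} + J_{N₂} ⊗ I_T + I_{N₂} ⊗ J_T`. -/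
noncomputable def Bmat2 (N₁ N₂ T : ℕ) : Matrix (Fin N₂ × Fin T) (Fin N₂ × Fin T) ℝ :=
  (N₁ : ℝ) • 1 + Jmat N₂ ⊗ₖ (1 : Matrix (Fin T) (Fin T) ℝ) +
    (1 : Matrix (Fin N₂) (Fin N₂) ℝ) ⊗ₖ Jmat T

/-- `B₃ = T I_{N₁N₂} + I_{N₁} ⊗ J_{N₂} + J_{N₁} ⊗ I_{N₂}`. -/
noncomputable def Bmat3 (N₁ N₂ T : ℕ) : Matrix (Fin N₁ × Fin N₂) (Fin N₁ × Fin N₂) ℝ :=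
  (T : ℝ) • 1 + (1 : Matrix (Fin N₁) (Fin N₁) ℝ) ⊗ₖ Jmat N₂ +
    Jmat N₁ ⊗ₖ (1 : Matrix (Fin N₂) (Fin N₂) ℝ)

/-!
Let `I`, `J`, `K` be the sets of levels. The columns of `D` are the dummies of the projections of
`I × J × K` to pairs of factors; the columns of `C` are, up to sign, the dummies of the further
projections to single factors. For two different pairs, `I × J × K` is their fibre product over the
shared factor, so by base change the product of the two blocks of `D` is computed from the
projections to that factor alone, and the signs in `C` make the same block of `C Cᵀ` its negative.
On the diagonal, `Dᵀ D` counts fibres, and `C Cᵀ` records which pairs agree in their first and in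
their second entry.
-/

/-- The dummy-variable matrix of a factor `f : α → β`: the row of `a` is the indicator of its
level `f a`, so that multiplying by this matrix is precomposing with `f`. -/
def dummyMatrix (R : Type*) [Zero R] [One R] {α β : Type*} [DecidableEq β] (f : α → β) :
    Matrix α β R :=
  (1 : Matrix β β R).submatrix f id

/-- The square `f ∘ p = g ∘ q` exhibits `α` as the fibre product of `f` and `g`, with projections
`p` and `q`. Unlike `CategoryTheory.IsPullback`, it allows types in different universes. -/
structure IsFibreProduct {α β γ δ : Type*} (p : α → β) (q : α → γ) (f : β → δ) (g : γ → δ) :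
    Prop where
  comm (x : α) : f (p x) = g (q x)
  existsUnique (b : β) (c : γ) : f b = g c → ∃! x, p x = b ∧ q x = c

theorem IsFibreProduct.symm {α β γ δ : Type*} {p : α → β} {q : α → γ} {f : β → δ} {g : γ → δ}
    (h : IsFibreProduct p q f g) : IsFibreProduct q p g f where
  comm x := (h.comm x).symm
  existsUnique c b hcb := by simpa only [and_comm] using h.existsUnique b c hcb.symm

section DummyMatrix

variable {R α β γ δ : Type*} [DecidableEq β]

theorem dummyMatrix_apply [Zero R] [One R] (f : α → β) (a : α) (b : β) :
    dummyMatrix R f a b = if f a = b then 1 else 0 :=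
  one_apply

theorem dummyMatrix_mul_transpose [NonAssocSemiring R] [Fintype β] (f : α → β) (g : γ → β) :
    dummyMatrix R f * (dummyMatrix R g)ᵀ = (1 : Matrix β β R).submatrix f g := by
  rw [dummyMatrix, dummyMatrix, transpose_submatrix, transpose_one,
    ← submatrix_mul _ _ _ _ _ Function.bijective_id, Matrix.mul_one]

theorem one_submatrix_fst_fst [MulZeroOneClass R] :
    (1 : Matrix β β R).submatrix (Prod.fst : β × γ → β) (Prod.fst : β × δ → β) = 1 ⊗ₖ of 1 := by
  ext x y
  simp

theorem one_submatrix_snd_snd [MulZeroOneClass R] :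
    (1 : Matrix β β R).submatrix (Prod.snd : γ × β → β) (Prod.snd : δ × β → β) = of 1 ⊗ₖ 1 := by
  ext x y
  simp

variable [NonAssocSemiring R] [Fintype α] [DecidableEq γ]

theorem transpose_dummyMatrix_mul_apply (p : α → β) (q : α → γ) (b : β) (c : γ) :
    ((dummyMatrix R p)ᵀ * dummyMatrix R q) b c =
      (Finset.card {x | p x = b ∧ q x = c} : R) := by
  simp only [mul_apply, transpose_apply, dummyMatrix_apply, ite_zero_mul_ite_zero, mul_one,
    Finset.sum_boole]

theorem transpose_dummyMatrix_mul_self_of_bijective [Fintype δ] {p : α → β} {q : α → δ}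
    (hpq : Function.Bijective fun x => (p x, q x)) :
    (dummyMatrix R p)ᵀ * dummyMatrix R p = (Fintype.card δ : R) • 1 := by
  have card_fiber (b : β) : Finset.card {x | p x = b} = Fintype.card δ := by
    refine Finset.card_nbij q (fun _ _ => Finset.mem_univ _) ?_ ?_
    · intro x hx y hy hxy
      exact hpq.injective (Prod.ext (by simp_all) hxy)
    · intro d _
      obtain ⟨x, hx⟩ := hpq.surjective (b, d)
      obtain ⟨hxb, hxd⟩ := Prod.mk.inj hx
      exact ⟨x, by simpa using hxb, hxd⟩
  ext b b'
  rw [transpose_dummyMatrix_mul_apply, Matrix.smul_apply]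
  obtain rfl | hbb' := eq_or_ne b b'
  · simp [card_fiber]
  · have no_common : ∀ x, ¬(p x = b ∧ p x = b') := fun _ ⟨hb, hb'⟩ => hbb' (hb.symm.trans hb')
    simp [no_common, hbb']

theorem IsFibreProduct.transpose_dummyMatrix_mul [DecidableEq δ]
    {p : α → β} {q : α → γ} {f : β → δ} {g : γ → δ} (h : IsFibreProduct p q f g) :
    (dummyMatrix R p)ᵀ * dummyMatrix R q = (1 : Matrix δ δ R).submatrix f g := by
  ext b c
  rw [transpose_dummyMatrix_mul_apply, submatrix_apply]
  by_cases hbc : f b = g c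
  · have card_fiber : Finset.card {x | p x = b ∧ q x = c} = 1 :=
      Finset.card_eq_one_iff_existsUnique.2 (by simpa using h.existsUnique b c hbc)
    simp [card_fiber, one_apply, hbc]
  · have fiber_empty : ∀ x, ¬(p x = b ∧ q x = c) := fun x ⟨hb, hc⟩ => hbc (hb ▸ hc ▸ h.comm x)
    simp [fiber_empty, hbc]

end DummyMatrix

section InteractedEffects

variable (R I J K : Type*)

theorem isFibreProduct_over_first :
    IsFibreProduct (fun x : I × J × K => (x.1, x.2.2)) (fun x => (x.1, x.2.1))
      Prod.fst Prod.fst where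
  comm _ := rfl
  existsUnique b c h := ⟨(b.1, c.2, b.2), ⟨rfl, Prod.ext h rfl⟩, by grind⟩

theorem isFibreProduct_over_second :
    IsFibreProduct (fun x : I × J × K => x.2) (fun x => (x.1, x.2.1)) Prod.fst Prod.snd where
  comm _ := rfl
  existsUnique b c h := ⟨(c.1, b), ⟨rfl, Prod.ext rfl h⟩, by grind⟩

theorem isFibreProduct_over_third :
    IsFibreProduct (fun x : I × J × K => (x.1, x.2.2)) (fun x => x.2) Prod.snd Prod.snd where
  comm _ := rfl
  existsUnique b c h := ⟨(b.1, c.1, b.2), ⟨rfl, Prod.ext rfl h⟩, by grind⟩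

variable [DecidableEq I] [DecidableEq J] [DecidableEq K]

/-- The matrix `D` of three-way interacted fixed effects, for arbitrary sets of levels and
coefficients in `R`. -/
def interactedDummies [Zero R] [One R] :
    Matrix (I × J × K) ((I × K) ⊕ (J × K) ⊕ (I × J)) R :=
  fromCols (dummyMatrix R fun x => (x.1, x.2.2))
    (fromCols (dummyMatrix R fun x => x.2) (dummyMatrix R fun x => (x.1, x.2.1)))

/-- The constraint matrix `C` of three-way interacted fixed effects, in the same generality. -/
def interactedConstraints [Zero R] [One R] [Neg R] :
    Matrix ((I × K) ⊕ (J × K) ⊕ (I × J)) (K ⊕ I ⊕ J) R :=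
  fromRows (fromCols (dummyMatrix R Prod.snd) (fromCols (dummyMatrix R Prod.fst) 0))
    (fromRows (fromCols (-dummyMatrix R Prod.snd) (fromCols 0 (dummyMatrix R Prod.fst)))
      (fromCols 0 (fromCols (-dummyMatrix R Prod.fst) (-dummyMatrix R Prod.snd))))

variable [Fintype I] [Fintype J] [Fintype K]

theorem transpose_interactedDummies_mul_self [Semiring R] :
    (interactedDummies R I J K)ᵀ * interactedDummies R I J K =
      fromBlocks ((Fintype.card J : R) • 1)
        (fromCols ((1 : Matrix K K R).submatrix Prod.snd Prod.snd)
          ((1 : Matrix I I R).submatrix Prod.fst Prod.fst))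
        (fromRows ((1 : Matrix K K R).submatrix Prod.snd Prod.snd)
          ((1 : Matrix I I R).submatrix Prod.fst Prod.fst))
        (fromBlocks ((Fintype.card I : R) • 1)
          ((1 : Matrix J J R).submatrix Prod.fst Prod.snd)
          ((1 : Matrix J J R).submatrix Prod.snd Prod.fst)
          ((Fintype.card K : R) • 1)) := by
  have bijective₁ : Function.Bijective fun x : I × J × K => ((x.1, x.2.2), x.2.1) :=
    Function.bijective_iff_has_inverse.2 ⟨fun y => (y.1.1, y.2, y.1.2), fun _ => rfl, fun _ => rfl⟩
  have bijective₂ : Function.Bijective fun x : I × J × K => (x.2, x.1) := Prod.swap_bijective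
  have bijective₃ : Function.Bijective fun x : I × J × K => ((x.1, x.2.1), x.2.2) :=
    (Equiv.prodAssoc I J K).symm.bijective
  rw [interactedDummies, transpose_fromCols, transpose_fromCols, fromRows_mul_fromCols,
    fromRows_mul_fromCols, mul_fromCols, fromRows_mul,
    transpose_dummyMatrix_mul_self_of_bijective bijective₁,
    transpose_dummyMatrix_mul_self_of_bijective bijective₂,
    transpose_dummyMatrix_mul_self_of_bijective bijective₃,
    (isFibreProduct_over_third I J K).transpose_dummyMatrix_mul,
    (isFibreProduct_over_third I J K).symm.transpose_dummyMatrix_mul,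
    (isFibreProduct_over_first I J K).transpose_dummyMatrix_mul,
    (isFibreProduct_over_first I J K).symm.transpose_dummyMatrix_mul,
    (isFibreProduct_over_second I J K).transpose_dummyMatrix_mul,
    (isFibreProduct_over_second I J K).symm.transpose_dummyMatrix_mul]

theorem interactedConstraints_mul_transpose [Ring R] :
    interactedConstraints R I J K * (interactedConstraints R I J K)ᵀ =
      fromBlocks
        ((1 : Matrix K K R).submatrix Prod.snd Prod.snd +
          (1 : Matrix I I R).submatrix Prod.fst Prod.fst)
        (fromCols (-(1 : Matrix K K R).submatrix Prod.snd Prod.snd)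
          (-(1 : Matrix I I R).submatrix Prod.fst Prod.fst))
        (fromRows (-(1 : Matrix K K R).submatrix Prod.snd Prod.snd)
          (-(1 : Matrix I I R).submatrix Prod.fst Prod.fst))
        (fromBlocks
          ((1 : Matrix K K R).submatrix Prod.snd Prod.snd +
            (1 : Matrix J J R).submatrix Prod.fst Prod.fst)
          (-(1 : Matrix J J R).submatrix Prod.fst Prod.snd)
          (-(1 : Matrix J J R).submatrix Prod.snd Prod.fst)
          ((1 : Matrix I I R).submatrix Prod.fst Prod.fst +
            (1 : Matrix J J R).submatrix Prod.snd Prod.snd)) := by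
  rw [interactedConstraints, transpose_fromRows, transpose_fromRows, fromRows_mul_fromCols,
    fromRows_mul_fromCols, mul_fromCols, fromRows_mul]
  simp only [transpose_fromCols, transpose_neg, transpose_zero, fromCols_mul_fromRows,
    Matrix.mul_neg, Matrix.neg_mul, Matrix.mul_zero, Matrix.zero_mul, neg_neg, neg_zero, add_zero,
    zero_add, dummyMatrix_mul_transpose]

theorem stmt_13_general [Ring R] :
    (interactedDummies R I J K)ᵀ * interactedDummies R I J K +
        interactedConstraints R I J K * (interactedConstraints R I J K)ᵀ =
      fromBlocks ((Fintype.card J : R) • 1 + of 1 ⊗ₖ 1 + 1 ⊗ₖ of 1) 0 0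
        (fromBlocks ((Fintype.card I : R) • 1 + of 1 ⊗ₖ 1 + 1 ⊗ₖ of 1) 0 0
          ((Fintype.card K : R) • 1 + 1 ⊗ₖ of 1 + of 1 ⊗ₖ 1)) := by
  rw [transpose_interactedDummies_mul_self, interactedConstraints_mul_transpose]
  simp only [fromBlocks_add, ← fromCols_neg, ← fromRows_neg, add_neg_cancel, add_assoc,
    one_submatrix_fst_fst, one_submatrix_snd_snd]

end InteractedEffects

theorem Dmat_eq_interactedDummies (N₁ N₂ T : ℕ) :
    Dmat N₁ N₂ T = interactedDummies ℝ (Fin N₁) (Fin N₂) (Fin T) := by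
  ext ⟨i, j, t⟩ (_ | _ | _) <;>
    simp [Dmat, interactedDummies, dummyMatrix_apply, Prod.ext_iff]

theorem Cmat_eq_interactedConstraints (N₁ N₂ T : ℕ) :
    Cmat N₁ N₂ T = interactedConstraints ℝ (Fin N₁) (Fin N₂) (Fin T) := by
  ext (_ | _ | _) (_ | _ | _) <;> simp [Cmat, interactedConstraints, dummyMatrix_apply]

/-- `Dᵀ D + C Cᵀ` is block diagonal with diagonal blocks `B₁`, `B₂`, `B₃`, and
all off-diagonal blocks with respect to the partition `(N₁T, N₂T, N₁N₂)`
vanish. -/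
theorem stmt_13 (N₁ N₂ T : ℕ) (h₁ : 0 < N₁) (h₂ : 0 < N₂) (hT : 0 < T) :
    (Dmat N₁ N₂ T)ᵀ * Dmat N₁ N₂ T + Cmat N₁ N₂ T * (Cmat N₁ N₂ T)ᵀ =
      Matrix.of (fun a b =>
        match a, b with
        | Sum.inl a', Sum.inl b' => Bmat1 N₁ N₂ T a' b'
        | Sum.inr (Sum.inl a'), Sum.inr (Sum.inl b') => Bmat2 N₁ N₂ T a' b'
        | Sum.inr (Sum.inr a'), Sum.inr (Sum.inr b') => Bmat3 N₁ N₂ T a' b'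
        | _, _ => 0) := by
  rw [Dmat_eq_interactedDummies, Cmat_eq_interactedConstraints, stmt_13_general]
  ext (_ | _ | _) (_ | _ | _) <;> simp [Bmat1, Bmat2, Bmat3, Jmat]
end

section
/- Let N₁, N₂, T be positive integers, and let D and C be the dummy-variable matrix and the constraint matrix of the three-way interacted fixed effects specification. Then the symmetric matrix Dᵀ D + C Cᵀ is positive definite; equivalently, if a vector φ ∈ ℝ^{N₁T + N₂T + N₁N₂} satisfies D φ = 0 and Cᵀ φ = 0, then φ = 0. -/
open Matrix

/-!
The common zeros of `D` and `Cᵀ` vanish because `ker D ⊆ range C`: if `C ξ = φ` and `Cᵀ φ = 0`,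
then `Cᵀ C ξ = 0`, so `C ξ = 0`. In turn `ker D ⊆ range C` says that interacted effects with
`a i t + b j t + c i j = 0` only trade main effects against each other, which is seen by freezing
one index at a time at a reference point. Positive definiteness follows since `Dᵀ D + C Cᵀ` is the
Gram matrix `Mᵀ M` of the matrix `M` with `D` stacked on top of `Cᵀ`.
-/

section GramMatrix

variable {R m n p : Type*} [Ring R] [PartialOrder R] [StarRing R] [StarOrderedRing R]
  [NoZeroDivisors R] [Fintype m] [Fintype n] [Fintype p]

theorem eq_zero_of_mulVec_eq_of_conjTranspose_mulVec_eq_zero {B : Matrix n p R} {x : n → R}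
    {y : p → R} (hy : B *ᵥ y = x) (hx : Bᴴ *ᵥ x = 0) : x = 0 := by
  rw [← hy, mulVec_mulVec, conjTranspose_mul_self_mulVec_eq_zero] at hx
  exact hy.symm.trans hx

theorem posDef_conjTranspose_mul_self_add_self_mul_conjTranspose (A : Matrix m n R)
    (B : Matrix n p R) (h : ∀ x, A *ᵥ x = 0 → Bᴴ *ᵥ x = 0 → x = 0) :
    (Aᴴ * A + B * Bᴴ).PosDef := by
  have gram : (fromRows A Bᴴ)ᴴ * fromRows A Bᴴ = Aᴴ * A + B * Bᴴ := by
    rw [conjTranspose_fromRows_eq_fromCols_conjTranspose, fromCols_mul_fromRows,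
      conjTranspose_conjTranspose]
  rw [← gram]
  refine .conjTranspose_mul_self _ fun x y hxy => sub_eq_zero.mp (h _ ?_ ?_)
  · simpa only [fromRows_mulVec, Sum.elim_comp_inl, mulVec_sub, sub_eq_zero] using
      congrArg (· ∘ Sum.inl) hxy
  · simpa only [fromRows_mulVec, Sum.elim_comp_inr, mulVec_sub, sub_eq_zero] using
      congrArg (· ∘ Sum.inr) hxy

end GramMatrix

theorem exists_mainEffects_of_interactedEffects_add_eq_zero {ι κ τ G : Type*} [Nonempty ι]
    [Nonempty κ] [Nonempty τ] [AddCommGroup G] {a : ι → τ → G} {b : κ → τ → G} {c : ι → κ → G}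
    (h : ∀ i j t, a i t + b j t + c i j = 0) :
    ∃ (u : τ → G) (v : ι → G) (w : κ → G),
      (∀ i t, a i t = u t + v i) ∧ (∀ j t, b j t = -u t + w j) ∧ ∀ i j, c i j = -v i - w j := by
  obtain ⟨i₀⟩ := ‹Nonempty ι›
  obtain ⟨j₀⟩ := ‹Nonempty κ›
  obtain ⟨t₀⟩ := ‹Nonempty τ›
  have ha (i : ι) (j : κ) (t : τ) : a i t = -b j t - c i j := by
    rw [← sub_eq_zero, ← h i j t]
    abel
  have hbc (i : ι) (j : κ) (t : τ) : b j t + c i j = b j₀ t + c i j₀ := by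
    rw [← neg_inj, neg_add', neg_add', ← ha, ← ha]
  have hb (j : κ) (t : τ) : b j t = b j₀ t + (b j t₀ - b j₀ t₀) := by
    have ht := eq_sub_of_add_eq (hbc i₀ j t)
    have ht₀ := eq_sub_of_add_eq (hbc i₀ j t₀)
    rw [ht, ht₀]
    abel
  refine ⟨fun t => -b j₀ t, fun i => -c i j₀, fun j => b j t₀ - b j₀ t₀, fun i t => ?_,
    fun j t => ?_, fun i j => ?_⟩
  · rw [ha i j₀ t, sub_eq_add_neg]
  · rw [neg_neg, ← hb]
  · beta_reduce
    rw [eq_sub_of_add_eq' (hbc i j t₀)]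
    abel

section FixedEffects

variable {N₁ N₂ T : ℕ}

theorem Dmat_mulVec_apply (φ : (Fin N₁ × Fin T) ⊕ (Fin N₂ × Fin T) ⊕ (Fin N₁ × Fin N₂) → ℝ)
    (i : Fin N₁) (j : Fin N₂) (t : Fin T) :
    (Dmat N₁ N₂ T *ᵥ φ) (i, j, t) =
      φ (.inl (i, t)) + φ (.inr (.inl (j, t))) + φ (.inr (.inr (i, j))) := by
  simp [mulVec, dotProduct, Dmat, Fintype.sum_sum_type, Fintype.sum_prod_type, ite_and, add_assoc]

theorem Cmat_mulVec_sumElim (u : Fin T → ℝ) (v : Fin N₁ → ℝ) (w : Fin N₂ → ℝ) :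
    Cmat N₁ N₂ T *ᵥ Sum.elim u (Sum.elim v w) =
      Sum.elim (fun (i, t) => u t + v i)
        (Sum.elim (fun (j, t) => -u t + w j) fun (i, j) => -v i - w j) := by
  ext (⟨i, t⟩ | ⟨j, t⟩ | ⟨i, j⟩) <;>
    simp [mulVec, dotProduct, Cmat, Fintype.sum_sum_type, sub_eq_add_neg]

theorem exists_Cmat_mulVec_eq_of_Dmat_mulVec_eq_zero [NeZero N₁] [NeZero N₂] [NeZero T]
    {φ : (Fin N₁ × Fin T) ⊕ (Fin N₂ × Fin T) ⊕ (Fin N₁ × Fin N₂) → ℝ}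
    (hφ : Dmat N₁ N₂ T *ᵥ φ = 0) : ∃ ξ, Cmat N₁ N₂ T *ᵥ ξ = φ := by
  obtain ⟨u, v, w, ha, hb, hc⟩ := exists_mainEffects_of_interactedEffects_add_eq_zero
    fun i j t => (Dmat_mulVec_apply φ i j t).symm.trans (congrFun hφ (i, j, t))
  refine ⟨Sum.elim u (Sum.elim v w), ?_⟩
  rw [Cmat_mulVec_sumElim]
  ext (⟨i, t⟩ | ⟨j, t⟩ | ⟨i, j⟩)
  exacts [(ha i t).symm, (hb j t).symm, (hc i j).symm]

end FixedEffects

/-- `Dᵀ D + C Cᵀ` is positive definite; equivalently, `D φ = 0` and `Cᵀ φ = 0`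
imply `φ = 0`. -/
theorem stmt_14 (N₁ N₂ T : ℕ) (h₁ : 0 < N₁) (h₂ : 0 < N₂) (hT : 0 < T) :
    ((Dmat N₁ N₂ T)ᵀ * Dmat N₁ N₂ T + Cmat N₁ N₂ T * (Cmat N₁ N₂ T)ᵀ).PosDef ∧
      ∀ φ : ((Fin N₁ × Fin T) ⊕ (Fin N₂ × Fin T) ⊕ (Fin N₁ × Fin N₂)) → ℝ,
        (Dmat N₁ N₂ T).mulVec φ = 0 → ((Cmat N₁ N₂ T)ᵀ).mulVec φ = 0 → φ = 0 := by
  have : NeZero N₁ := .of_pos h₁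
  have : NeZero N₂ := .of_pos h₂
  have : NeZero T := .of_pos hT
  have ker_inf_ker (φ) (hD : Dmat N₁ N₂ T *ᵥ φ = 0) (hC : (Cmat N₁ N₂ T)ᵀ *ᵥ φ = 0) : φ = 0 := by
    obtain ⟨ξ, hξ⟩ := exists_Cmat_mulVec_eq_of_Dmat_mulVec_eq_zero hD
    exact eq_zero_of_mulVec_eq_of_conjTranspose_mulVec_eq_zero hξ hC
  exact ⟨posDef_conjTranspose_mul_self_add_self_mul_conjTranspose _ _ ker_inf_ker, ker_inf_ker⟩
end

section
/- Let n be a positive integer, let K ⊆ ℝ^n be a nonempty compact set, and let f : ℝ^n → ℝ be continuous. Define the Legendre-type transform f* : ℝ^n → ℝ by f*(υ) = max_{φ ∈ K} ( ⟨υ, φ⟩ − f(φ) ). Suppose that at a point υ₀ ∈ ℝ^n the maximizer is unique, i.e. there is exactly one φ₀ ∈ K with f*(υ₀) = ⟨υ₀, φ₀⟩ − f(φ₀). Then f* is Fréchet differentiable at υ₀ and its gradient there equals φ₀, i.e. ∇f*(υ₀) = φ₀. -/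
open scoped RealInnerProductSpace

/-- The Legendre-type transform `f*(υ) = max_{φ ∈ K} (⟨υ, φ⟩ − f(φ))` of a
function `f` over a set `K`. -/
noncomputable def legendreTransform {n : ℕ} (K : Set (EuclideanSpace ℝ (Fin n)))
    (f : EuclideanSpace ℝ (Fin n) → ℝ) (υ : EuclideanSpace ℝ (Fin n)) : ℝ :=
  sSup ((fun φ => ⟪υ, φ⟫ - f φ) '' K)

/-!
A maximizer `y` at `x` makes `A y` a subgradient at `x` of the supremum `F` of the affine functions
`x ↦ A y x - f y`. Comparing the subgradient inequalities at `x₀` and at `x` gives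
`0 ≤ F x - F x₀ - A y₀ (x - x₀) ≤ (A y - A y₀) (x - x₀)`, so `F` has derivative `A y₀` at `x₀` as
soon as `y → y₀` when `x → x₀`. Compactness and uniqueness of the maximizer `y₀` force this
convergence: away from `y₀` the values stay below the value at `y₀`, for all `x` near `x₀`.
-/

open Filter Set Topology

theorem hasFDerivAt_of_tendsto_subgradient {E : Type*} [NormedAddCommGroup E] [NormedSpace ℝ E]
    {F : E → ℝ} {g : E → StrongDual ℝ E} {g₀ : StrongDual ℝ E} {x₀ : E}
    (hg₀ : ∀ᶠ x in 𝓝 x₀, F x₀ + g₀ (x - x₀) ≤ F x)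
    (hg : ∀ᶠ x in 𝓝 x₀, F x + g x (x₀ - x) ≤ F x₀)
    (hlim : Tendsto g (𝓝 x₀) (𝓝 g₀)) : HasFDerivAt F g₀ x₀ := by
  rw [hasFDerivAt_iff_isLittleO, Asymptotics.isLittleO_iff]
  intro ε hε
  filter_upwards [hg₀, hg, hlim (Metric.closedBall_mem_nhds g₀ hε)] with x hlower hupper hx
  have hupper' : F x - F x₀ ≤ g x (x - x₀) := by
    rw [← neg_sub x x₀, map_neg] at hupper
    linarith
  rw [Real.norm_of_nonneg (by linarith)]
  calc F x - F x₀ - g₀ (x - x₀)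
    _ ≤ (g x - g₀) (x - x₀) := sub_le_sub_right hupper' _
    _ ≤ ‖(g x - g₀) (x - x₀)‖ := Real.le_norm_self _
    _ ≤ ε * ‖x - x₀‖ := (g x - g₀).le_of_opNorm_le (mem_closedBall_iff_norm.1 hx) _

theorem tendsto_maximizer_of_unique {X Y R : Type*} [TopologicalSpace X] [TopologicalSpace Y]
    [LinearOrder R] [DenselyOrdered R] {K : Set Y} {h : X → Y → R} {m : X → Y} {x₀ : X} {y₀ : Y}
    (hK : IsCompact K)
    (husc : ∀ y ∈ K, UpperSemicontinuousWithinAt (fun p : X × Y => h p.1 p.2) (univ ×ˢ K) (x₀, y))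
    (hlsc : LowerSemicontinuousAt (fun x => h x y₀) x₀)
    (hlt : ∀ y ∈ K, y ≠ y₀ → h x₀ y < h x₀ y₀)
    (hmK : ∀ᶠ x in 𝓝 x₀, m x ∈ K) (hm : ∀ᶠ x in 𝓝 x₀, h x y₀ ≤ h x (m x)) :
    Tendsto m (𝓝 x₀) (𝓝 y₀) := by
  rw [(nhds_basis_opens y₀).tendsto_right_iff]
  rintro U ⟨hy₀U, hU⟩
  -- The second `y ∈ K` survives the passage to a neighbourhood of `y` in `Y`, where `husc` needs it.
  have hlt_away : ∀ᶠ x in 𝓝 x₀, ∀ y ∈ K \ U, y ∈ K → h x y < h x y₀ := by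
    refine (hK.diff hU).eventually_forall_of_forall_eventually fun y hy => ?_
    obtain ⟨c, hyc, hcy₀⟩ := exists_between (hlt y hy.1 (ne_of_mem_of_not_mem hy₀U hy.2).symm)
    have hlt_c := eventually_nhdsWithin_iff.1 (husc y hy.1 c hyc)
    have hc_lt := (continuous_fst.tendsto (x₀, y)).eventually (hlsc c hcy₀)
    filter_upwards [hlt_c, hc_lt] with p hp hp' hpK
    exact (hp ⟨mem_univ _, hpK⟩).trans hp'
  filter_upwards [hlt_away, hmK, hm] with x hx hmxK hmx
  by_contra hmU
  exact (hx (m x) ⟨hmxK, hmU⟩ hmxK).not_ge hmx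

section AffineSup

variable {E Y : Type*} [NormedAddCommGroup E] [NormedSpace ℝ E] {K : Set Y}
  {A : Y → StrongDual ℝ E} {f : Y → ℝ} {x : E} {y : Y}

/-- The pointwise supremum of the affine functions `x ↦ A y x - f y` over `y ∈ K`. When `A` is the
Riesz pairing this is the Legendre-type transform of `f` over `K`. Like `sSup`, it takes the value
`0` where the supremum is infinite. -/
noncomputable def affineSup (K : Set Y) (A : Y → StrongDual ℝ E) (f : Y → ℝ) (x : E) : ℝ :=
  sSup ((fun y => A y x - f y) '' K)

theorem affineSup_eq_of_isMaxOn (hy : y ∈ K) (hmax : IsMaxOn (fun y => A y x - f y) K y) :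
    affineSup K A f x = A y x - f y :=
  IsGreatest.csSup_eq ⟨mem_image_of_mem _ hy, forall_mem_image.2 hmax⟩

variable [TopologicalSpace Y]

theorem upperSemicontinuousOn_apply_sub (hA : ContinuousOn A K) (hf : LowerSemicontinuousOn f K) :
    UpperSemicontinuousOn (fun p : E × Y => A p.2 p.1 - f p.2) (univ ×ˢ K) := by
  have hsnd : MapsTo Prod.snd ((univ : Set E) ×ˢ K) K := fun _ hp => hp.2
  have hA' : ContinuousOn (fun p : E × Y => A p.2 p.1) (univ ×ˢ K) :=
    (hA.comp continuousOn_snd hsnd).clm_apply continuousOn_fst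
  have hf' : UpperSemicontinuousOn (fun p : E × Y => -f p.2) (univ ×ˢ K) :=
    continuous_neg.comp_lowerSemicontinuousOn_antitone
      (hf.comp continuousOn_snd hsnd) fun _ _ => neg_le_neg
  simpa only [sub_eq_add_neg] using hA'.upperSemicontinuousOn.add hf'

theorem exists_isMaxOn_apply_sub (hK : IsCompact K) (hne : K.Nonempty) (hA : ContinuousOn A K)
    (hf : LowerSemicontinuousOn f K) (x : E) :
    ∃ y ∈ K, IsMaxOn (fun y => A y x - f y) K y :=
  ((upperSemicontinuousOn_apply_sub hA hf).comp (Continuous.prodMk_right x).continuousOn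
    fun _ hy => ⟨mem_univ _, hy⟩).exists_isMaxOn hne hK

theorem apply_sub_le_affineSup (hK : IsCompact K) (hA : ContinuousOn A K)
    (hf : LowerSemicontinuousOn f K) (hy : y ∈ K) (x : E) :
    A y x - f y ≤ affineSup K A f x := by
  obtain ⟨z, hz, hmax⟩ := exists_isMaxOn_apply_sub hK ⟨y, hy⟩ hA hf x
  exact (hmax hy).trans_eq (affineSup_eq_of_isMaxOn hz hmax).symm

theorem affineSup_add_apply_sub_le (hK : IsCompact K) (hA : ContinuousOn A K)
    (hf : LowerSemicontinuousOn f K) (hy : y ∈ K)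
    (hmax : affineSup K A f x = A y x - f y) (x' : E) :
    affineSup K A f x + A y (x' - x) ≤ affineSup K A f x' := by
  have hle := apply_sub_le_affineSup hK hA hf hy x'
  rw [map_sub]
  linarith

theorem stmt_16_general {x₀ : E} {y₀ : Y} (hK : IsCompact K) (hA : ContinuousOn A K)
    (hf : LowerSemicontinuousOn f K) (hy₀ : y₀ ∈ K)
    (hmax : affineSup K A f x₀ = A y₀ x₀ - f y₀)
    (huniq : ∀ y ∈ K, affineSup K A f x₀ = A y x₀ - f y → y = y₀) :
    HasFDerivAt (affineSup K A f) (A y₀) x₀ := by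
  choose m hmK hm using exists_isMaxOn_apply_sub hK ⟨y₀, hy₀⟩ hA hf
  have hm_eq : ∀ x, affineSup K A f x = A (m x) x - f (m x) :=
    fun x => affineSup_eq_of_isMaxOn (hmK x) (hm x)
  have hlt : ∀ y ∈ K, y ≠ y₀ → A y x₀ - f y < A y₀ x₀ - f y₀ := fun y hy hne =>
    hmax ▸ (apply_sub_le_affineSup hK hA hf hy x₀).lt_of_ne fun heq => hne (huniq y hy heq.symm)
  have hm_tendsto : Tendsto m (𝓝 x₀) (𝓝 y₀) :=
    tendsto_maximizer_of_unique (h := fun x y => A y x - f y) hK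
      (fun y hy => upperSemicontinuousOn_apply_sub hA hf (x₀, y) ⟨mem_univ _, hy⟩)
      (by fun_prop : Continuous fun x => A y₀ x - f y₀).continuousAt.lowerSemicontinuousAt
      hlt (.of_forall hmK) (.of_forall fun x => hm x hy₀)
  have hAm_tendsto : Tendsto (fun x => A (m x)) (𝓝 x₀) (𝓝 (A y₀)) :=
    (hA y₀ hy₀).tendsto.comp (tendsto_nhdsWithin_iff.2 ⟨hm_tendsto, .of_forall hmK⟩)
  exact hasFDerivAt_of_tendsto_subgradient
    (.of_forall (affineSup_add_apply_sub_le hK hA hf hy₀ hmax))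
    (.of_forall fun x => affineSup_add_apply_sub_le hK hA hf (hmK x) (hm_eq x) x₀) hAm_tendsto

end AffineSup

/-- Danskin-type differentiability: if the maximizer defining `f*(υ₀)` is
unique and equals `φ₀`, then `f*` is (Fréchet) differentiable at `υ₀` with
gradient `φ₀`. -/
theorem stmt_16 (n : ℕ) (hn : 0 < n) (K : Set (EuclideanSpace ℝ (Fin n)))
    (hK : IsCompact K) (hKne : K.Nonempty)
    (f : EuclideanSpace ℝ (Fin n) → ℝ) (hf : Continuous f)
    (υ₀ φ₀ : EuclideanSpace ℝ (Fin n)) (hφ₀K : φ₀ ∈ K)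
    (hmax : legendreTransform K f υ₀ = ⟪υ₀, φ₀⟫ - f φ₀)
    (huniq : ∀ φ ∈ K, legendreTransform K f υ₀ = ⟪υ₀, φ⟫ - f φ → φ = φ₀) :
    HasGradientAt (legendreTransform K f) φ₀ υ₀ := by
  have hriesz : InnerProductSpace.toDual ℝ _ φ₀ = (innerSL ℝ).flip φ₀ := by
    rw [flip_innerSL_real]
    rfl
  rw [hasGradientAt_iff_hasFDerivAt, hriesz]
  exact stmt_16_general (A := (innerSL ℝ).flip) hK (ContinuousLinearMap.continuous _).continuousOn
    (hf.lowerSemicontinuous.lowerSemicontinuousOn K) hφ₀K hmax huniq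
end
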